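/- Assume α ∈ [1/2, 1) and that W additionally satisfies W(x,y) ≥ c_*((x/y)^α + (y/x)^α) for some c_* > 0 and all x,y > 0. Let a ∈ (0, 1+α) and δ ∈ (0, min{1+α−a, α}). Then there exists ε_* > 0 and for each b ∈ ℝ a constant C > 0 such that for every ε ∈ (0, ε_*], every normalised self-similar profile φ_ε for K_ε and every z > 0: ∫₀^z ω_{−a,b}(x) e^{−x} e^{−(Φ[φ_ε](x) − Φ[φ_ε](z))} dx ≤ C ε^{(δ−α)/α} ω_{1+α−a−δ,0}(z). -/

import Mathlib

open MeasureTheory Real Set Filter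

noncomputable def weight (a b x : ℝ) : ℝ := if x ≤ 1 then x ^ a else x ^ b

noncomputable def Xnorm (a b : ℝ) (g : ℝ → ℝ) : ℝ :=
  ∫ x in Ioi (0:ℝ), |g x| * weight a b x

def MemX (a b : ℝ) (g : ℝ → ℝ) : Prop :=
  IntegrableOn (fun x => g x * weight a b x) (Ioi 0)

noncomputable def Kern (ε : ℝ) (W : ℝ → ℝ → ℝ) (x y : ℝ) : ℝ := 2 + ε * W x y

def GoodW (α : ℝ) (W : ℝ → ℝ → ℝ) : Prop :=
  ContinuousOn (fun p : ℝ × ℝ => W p.1 p.2) (Ioi 0 ×ˢ Ioi 0) ∧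
  (∀ x y : ℝ, 0 < x → 0 < y → W x y = W y x) ∧
  (∀ l x y : ℝ, 0 < l → 0 < x → 0 < y → W (l * x) (l * y) = W x y) ∧
  (∀ x y : ℝ, 0 < x → 0 < y → 0 ≤ W x y ∧ W x y ≤ (x / y) ^ α + (y / x) ^ α)

def IsProfile (K : ℝ → ℝ → ℝ) (φ : ℝ → ℝ) : Prop :=
  LocallyIntegrableOn φ (Ioi 0) ∧
  (∀ᵐ x ∂(volume.restrict (Ioi (0:ℝ))), 0 ≤ φ x) ∧
  IntegrableOn (fun x => x * φ x) (Ioi 0) ∧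
  (∀ᵐ x ∂(volume.restrict (Ioi (0:ℝ))),
    x ^ 2 * φ x = ∫ y in Ioo 0 x, ∫ z in Ioi (x - y), y * K y z * φ y * φ z)

def IsNormalised (φ : ℝ → ℝ) : Prop := ∫ x in Ioi (0:ℝ), x * φ x = 1

noncomputable def betaW (W : ℝ → ℝ → ℝ) (φ : ℝ → ℝ) (x : ℝ) : ℝ :=
  ∫ z in Ioi (0:ℝ), W x z * φ z

noncomputable def Phi (ε : ℝ) (W : ℝ → ℝ → ℝ) (φ : ℝ → ℝ) (x : ℝ) : ℝ :=
  ε * ∫ y in Ioi x, betaW W φ y / y * exp (-y)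

open scoped ENNReal

noncomputable def Mom (ν : Measure ℝ) (p : ℝ) : ℝ≥0∞ := ∫⁻ x, ENNReal.ofReal (x ^ p) ∂ν

noncomputable def Aint (g : ℝ → ℝ≥0∞) (y z : ℝ) : ℝ≥0∞ := ∫⁻ x in Ioo y (y + z), g x

noncomputable def kk (ε : ℝ) (W : ℝ → ℝ → ℝ) (y z : ℝ) : ℝ≥0∞ :=
  ENNReal.ofReal (y * (2 + ε * W y z))

noncomputable def LL (ν : Measure ℝ) (k : ℝ → ℝ → ℝ≥0∞) (x : ℝ) : ℝ≥0∞ :=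
  ∫⁻ y, ∫⁻ z, (if y < x ∧ x < y + z then k y z else 0) ∂ν ∂ν

lemma meas_ofReal_rpow (p : ℝ) : Measurable (fun x : ℝ => ENNReal.ofReal (x ^ p)) := by
  fun_prop

lemma dmono {ν : Measure ℝ} (hpos : ∀ᵐ x ∂ν, 0 < x) {H1 H2 : ℝ → ℝ → ℝ≥0∞}
    (h : ∀ y z, 0 < y → 0 < z → H1 y z ≤ H2 y z) :
    ∫⁻ y, ∫⁻ z, H1 y z ∂ν ∂ν ≤ ∫⁻ y, ∫⁻ z, H2 y z ∂ν ∂ν := by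
  apply lintegral_mono_ae
  filter_upwards [hpos] with y hy
  apply lintegral_mono_ae
  filter_upwards [hpos] with z hz
  exact h y z hy hz

lemma dprod_le {ν : Measure ℝ} (hpos : ∀ᵐ x ∂ν, 0 < x) {H : ℝ → ℝ → ℝ≥0∞} {f g : ℝ → ℝ≥0∞}
    (hf : Measurable f) (hg : Measurable g) {s t : Set ℝ} (hs : MeasurableSet s)
    (ht : MeasurableSet t)
    (h : ∀ y z, 0 < y → 0 < z → y ∈ s → z ∈ t → f y * g z ≤ H y z) :
    (∫⁻ y in s, f y ∂ν) * (∫⁻ z in t, g z ∂ν) ≤ ∫⁻ y, ∫⁻ z, H y z ∂ν ∂ν := by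
  rw [← lintegral_indicator hs, ← lintegral_indicator ht,
    ← lintegral_lintegral_mul (hf.indicator hs).aemeasurable (hg.indicator ht).aemeasurable]
  apply dmono hpos
  intro y z hy hz
  by_cases h1 : y ∈ s
  · by_cases h2 : z ∈ t
    · simpa [h1, h2] using h y z hy hz h1 h2
    · simp [h2]
  · simp [h1]

lemma mom_le {ν : Measure ℝ} (hpos : ∀ᵐ x ∂ν, 0 < x) {s q t : ℝ} (h1 : s ≤ q) (h2 : q ≤ t) :
    Mom ν q ≤ Mom ν s + Mom ν t := by
  unfold Mom
  rw [← lintegral_add_left (meas_ofReal_rpow s)]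
  apply lintegral_mono_ae
  filter_upwards [hpos] with x hx
  rw [← ENNReal.ofReal_add (by positivity) (by positivity)]
  apply ENNReal.ofReal_le_ofReal
  rcases le_total x 1 with hx1 | hx1
  · have := Real.rpow_le_rpow_of_exponent_ge hx hx1 h1
    have : 0 ≤ x ^ t := by positivity
    linarith
  · have := Real.rpow_le_rpow_of_exponent_le hx1 h2
    have : 0 ≤ x ^ s := by positivity
    linarith

lemma fin_of_near {ν : Measure ℝ} {q r : ℝ} (hq : q ≤ 1) (hr : 0 < r)
    (h1 : Mom ν 1 < ∞) (h : ∫⁻ y in Iio r, ENNReal.ofReal (y ^ q) ∂ν < ∞) : Mom ν q < ∞ := by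
  unfold Mom
  rw [← lintegral_add_compl _ (measurableSet_Iio (a := r))]
  refine ENNReal.add_lt_top.2 ⟨h, ?_⟩
  have : ∫⁻ y in (Iio r)ᶜ, ENNReal.ofReal (y ^ q) ∂ν
      ≤ ENNReal.ofReal (r ^ (q - 1)) * Mom ν 1 := by
    unfold Mom
    rw [← lintegral_const_mul _ (meas_ofReal_rpow 1)]
    refine le_trans ?_ (setLIntegral_le_lintegral (Iio r)ᶜ _)
    apply setLIntegral_mono' measurableSet_Iio.compl
    intro y hy
    have hy' : r ≤ y := by simpa using hy
    have hy0 : 0 < y := by linarith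
    rw [← ENNReal.ofReal_mul (by positivity)]
    apply ENNReal.ofReal_le_ofReal
    calc y ^ q = y ^ (q - 1) * y ^ (1:ℝ) := by rw [← Real.rpow_add hy0]; ring_nf
      _ ≤ r ^ (q - 1) * y ^ (1:ℝ) := by
        apply mul_le_mul_of_nonneg_right _ (by positivity)
        exact Real.rpow_le_rpow_of_nonpos hr hy' (by linarith)
  exact lt_of_le_of_lt this (ENNReal.mul_lt_top ENNReal.ofReal_lt_top h1)

lemma meas_region : MeasurableSet {q : (ℝ × ℝ) × ℝ | q.1.2 < q.1.1 ∧ q.1.1 < q.1.2 + q.2} := by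
  have h1 : MeasurableSet {q : (ℝ × ℝ) × ℝ | q.1.2 < q.1.1} :=
    measurableSet_lt (by fun_prop) (by fun_prop)
  have h2 : MeasurableSet {q : (ℝ × ℝ) × ℝ | q.1.1 < q.1.2 + q.2} :=
    measurableSet_lt (by fun_prop) (by fun_prop)
  exact h1.inter h2

/-- Tonelli. -/
lemma tonelli_LL {ν : Measure ℝ} [SFinite ν] (hpos : ∀ᵐ x ∂ν, 0 < x) {k : ℝ → ℝ → ℝ≥0∞}
    (hk : Measurable (Function.uncurry k)) {g : ℝ → ℝ≥0∞} (hg : Measurable g) :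
    ∫⁻ x in Ioi (0:ℝ), g x * LL ν k x = ∫⁻ y, ∫⁻ z, k y z * Aint g y z ∂ν ∂ν := by
  have hmeas : Measurable (fun q : (ℝ × ℝ) × ℝ =>
      if q.1.2 < q.1.1 ∧ q.1.1 < q.1.2 + q.2 then g q.1.1 * k q.1.2 q.2 else 0) := by
    apply Measurable.ite
    · exact meas_region
    · apply Measurable.mul (by fun_prop)
      exact hk.comp (f := fun q : (ℝ × ℝ) × ℝ => (q.1.2, q.2)) (by fun_prop)
    · exact measurable_const
  have hmeask : Measurable (fun q : (ℝ × ℝ) × ℝ =>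
      if q.1.2 < q.1.1 ∧ q.1.1 < q.1.2 + q.2 then k q.1.2 q.2 else 0) := by
    apply Measurable.ite
    · exact meas_region
    · exact hk.comp (f := fun q : (ℝ × ℝ) × ℝ => (q.1.2, q.2)) (by fun_prop)
    · exact measurable_const
  have e1 : ∀ x, g x * LL ν k x =
      ∫⁻ y, ∫⁻ z, (if y < x ∧ x < y + z then g x * k y z else 0) ∂ν ∂ν := by
    intro x
    unfold LL
    rw [← lintegral_const_mul]
    · congr 1; ext y
      rw [← lintegral_const_mul]
      · congr 1; ext z; split_ifs <;> simp
      · exact hmeask.comp (f := fun z : ℝ => ((x, y), z)) (by fun_prop)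
    · have := Measurable.lintegral_prod_right' (ν := ν) hmeask
      exact this.comp (f := fun y : ℝ => (x, y)) (by fun_prop)
  simp_rw [e1]
  rw [lintegral_lintegral_swap]
  · apply lintegral_congr_ae
    filter_upwards [hpos] with y hy
    rw [lintegral_lintegral_swap]
    · congr 1; ext z
      unfold Aint
      rw [← lintegral_const_mul _ hg]
      rw [← lintegral_indicator measurableSet_Ioi, ← lintegral_indicator measurableSet_Ioo]
      congr 1; ext x
      by_cases h : y < x ∧ x < y + z
      · have : 0 < x := by linarith [h.1]
        simp [indicator, h, this, mul_comm]
      · simp [indicator, h]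
    · apply Measurable.aemeasurable
      exact hmeas.comp (f := fun q : ℝ × ℝ => ((q.1, y), q.2)) (by fun_prop)
  · apply Measurable.aemeasurable
    have := Measurable.lintegral_prod_right' (ν := ν) hmeas
    exact this.comp (f := fun q : ℝ × ℝ => (q.1, q.2)) (by fun_prop)
    
lemma meas_LL {ν : Measure ℝ} [SFinite ν] {k : ℝ → ℝ → ℝ≥0∞}
    (hk : Measurable (Function.uncurry k)) : Measurable (LL ν k) := by
  have hmeask : Measurable (fun q : (ℝ × ℝ) × ℝ =>
      if q.1.2 < q.1.1 ∧ q.1.1 < q.1.2 + q.2 then k q.1.2 q.2 else 0) := by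
    apply Measurable.ite
    · exact meas_region
    · exact hk.comp (f := fun q : (ℝ × ℝ) × ℝ => (q.1.2, q.2)) (by fun_prop)
    · exact measurable_const
  have := Measurable.lintegral_prod_right' (ν := ν) hmeask
  exact Measurable.lintegral_prod_right' (ν := ν) this

lemma mom_mul (ν : Measure ℝ) (p q : ℝ) :
    ∫⁻ y, ∫⁻ z, ENNReal.ofReal (y ^ p) * ENNReal.ofReal (z ^ q) ∂ν ∂ν = Mom ν p * Mom ν q :=
  lintegral_lintegral_mul (meas_ofReal_rpow p).aemeasurable (meas_ofReal_rpow q).aemeasurable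

lemma mom_mul_const {ν : Measure ℝ} [SFinite ν] (hpos : ∀ᵐ x ∂ν, 0 < x) {c : ℝ} (hc : 0 ≤ c)
    (p q : ℝ) :
    ∫⁻ y, ∫⁻ z, ENNReal.ofReal (c * (y ^ p * z ^ q)) ∂ν ∂ν
      = ENNReal.ofReal c * (Mom ν p * Mom ν q) := by
  rw [← mom_mul, ← lintegral_const_mul]
  · apply lintegral_congr_ae
    filter_upwards [hpos] with y hy
    rw [← lintegral_const_mul]
    · apply lintegral_congr_ae
      filter_upwards [hpos] with z hz
      rw [ENNReal.ofReal_mul hc, ENNReal.ofReal_mul (by positivity)]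
    · exact (meas_ofReal_rpow q).const_mul _
  · exact Measurable.lintegral_prod_right' (ν := ν)
      (f := fun w : ℝ × ℝ => ENNReal.ofReal (w.1 ^ p) * ENNReal.ofReal (w.2 ^ q)) (by fun_prop)

/-- upper bound of a double integral by three products of moments -/
lemma three_le {ν : Measure ℝ} [SFinite ν] (hpos : ∀ᵐ x ∂ν, 0 < x) {H : ℝ → ℝ → ℝ≥0∞}
    {c1 c2 c3 p1 q1 p2 q2 p3 q3 : ℝ} (h1 : 0 ≤ c1) (h2 : 0 ≤ c2) (h3 : 0 ≤ c3)
    (h : ∀ y z, 0 < y → 0 < z → H y z ≤ ENNReal.ofReal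
      (c1 * (y ^ p1 * z ^ q1) + c2 * (y ^ p2 * z ^ q2) + c3 * (y ^ p3 * z ^ q3))) :
    ∫⁻ y, ∫⁻ z, H y z ∂ν ∂ν ≤ ENNReal.ofReal c1 * (Mom ν p1 * Mom ν q1)
      + ENNReal.ofReal c2 * (Mom ν p2 * Mom ν q2) + ENNReal.ofReal c3 * (Mom ν p3 * Mom ν q3) := by
  have mm : ∀ c p q : ℝ, Measurable (fun w : ℝ × ℝ => ENNReal.ofReal (c * (w.1 ^ p * w.2 ^ q))) := by
    intro c p q; fun_prop
  have m1 : ∀ c p q : ℝ, ∀ y, Measurable (fun z : ℝ => ENNReal.ofReal (c * (y ^ p * z ^ q))) := by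
    intro c p q y; fun_prop
  rw [← mom_mul_const hpos h1, ← mom_mul_const hpos h2, ← mom_mul_const hpos h3,
    ← lintegral_add_left, ← lintegral_add_left]
  · apply lintegral_mono_ae
    filter_upwards [hpos] with y hy
    rw [← lintegral_add_left (m1 _ _ _ _), ← lintegral_add_left]
    · apply lintegral_mono_ae
      filter_upwards [hpos] with z hz
      rw [← ENNReal.ofReal_add (by positivity) (by positivity),
        ← ENNReal.ofReal_add (by positivity) (by positivity)]
      exact h y z hy hz
    · exact (m1 _ _ _ _).add (m1 _ _ _ _)
  · exact (Measurable.lintegral_prod_right' (ν := ν) (mm c1 p1 q1)).add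
      (Measurable.lintegral_prod_right' (ν := ν) (mm c2 p2 q2))
  · exact Measurable.lintegral_prod_right' (ν := ν) (mm c1 p1 q1)

lemma rpow_id1 {y z α : ℝ} (hy : 0 < y) (hz : 0 < z) :
    y * (z / y) ^ α = y ^ (1 - α) * z ^ α := by
  rw [Real.div_rpow hz.le hy.le, Real.rpow_sub hy, Real.rpow_one]
  field_simp

lemma kk_low {α ε c : ℝ} {W : ℝ → ℝ → ℝ} (hε : 0 < ε) (hc : 0 < c)
    (hlow : ∀ x y : ℝ, 0 < x → 0 < y → c * ((x / y) ^ α + (y / x) ^ α) ≤ W x y)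
    {y z : ℝ} (hy : 0 < y) (hz : 0 < z) :
    ENNReal.ofReal (ε * c) * (ENNReal.ofReal (y ^ (1 - α)) * ENNReal.ofReal (z ^ α))
      ≤ kk ε W y z := by
  unfold kk
  rw [← ENNReal.ofReal_mul (by positivity), ← ENNReal.ofReal_mul (by positivity)]
  apply ENNReal.ofReal_le_ofReal
  rw [← rpow_id1 hy hz]
  have h1 := hlow y z hy hz
  have h2 : 0 ≤ (y / z) ^ α := by positivity
  have h3 : c * (z / y) ^ α ≤ W y z := by nlinarith
  have h4 : ε * (c * (z / y) ^ α) ≤ ε * W y z := by gcongr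
  nlinarith

lemma kk_low2 {α ε c : ℝ} {W : ℝ → ℝ → ℝ} (hε : 0 < ε) (hc : 0 < c)
    (hlow : ∀ x y : ℝ, 0 < x → 0 < y → c * ((x / y) ^ α + (y / x) ^ α) ≤ W x y)
    {y z : ℝ} (hy : 0 < y) (hz : 0 < z) :
    ENNReal.ofReal (2 * y) ≤ kk ε W y z := by
  unfold kk
  apply ENNReal.ofReal_le_ofReal
  have h1 := hlow y z hy hz
  have h2 : 0 ≤ c * ((y / z) ^ α + (z / y) ^ α) := by positivity
  have : 0 ≤ ε * W y z := by apply mul_nonneg hε.le; linarith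
  nlinarith

lemma kk_up {α ε : ℝ} {W : ℝ → ℝ → ℝ} (hε : 0 < ε)
    (hup : ∀ x y : ℝ, 0 < x → 0 < y → W x y ≤ (x / y) ^ α + (y / x) ^ α)
    {y z : ℝ} (hy : 0 < y) (hz : 0 < z) :
    kk ε W y z ≤ ENNReal.ofReal (y * (2 + ε * ((y / z) ^ α + (z / y) ^ α))) := by
  unfold kk
  apply ENNReal.ofReal_le_ofReal
  have := hup y z hy hz
  gcongr

lemma step1 {ν : Measure ℝ} (hpos : ∀ᵐ x ∂ν, 0 < x)
    {α ε c : ℝ} {W : ℝ → ℝ → ℝ} (hε : 0 < ε) (hc : 0 < c)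
    (hlow : ∀ x y : ℝ, 0 < x → 0 < y → c * ((x / y) ^ α + (y / x) ^ α) ≤ W x y)
    {x : ℝ} (hL : LL ν (kk ε W) x < ∞)
    (hP : ∫⁻ z in Ioi x, ENNReal.ofReal (z ^ α) ∂ν ≠ 0) :
    ∫⁻ y in Iio x, ENNReal.ofReal (y ^ (1 - α)) ∂ν < ∞ := by
  have h : (∫⁻ y in Iio x, ENNReal.ofReal (ε * c) * ENNReal.ofReal (y ^ (1 - α)) ∂ν)
      * (∫⁻ z in Ioi x, ENNReal.ofReal (z ^ α) ∂ν) ≤ LL ν (kk ε W) x := by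
    unfold LL
    apply dprod_le hpos (by fun_prop) (by fun_prop) measurableSet_Iio measurableSet_Ioi
    intro y z hy hz h1 h2
    simp only [mem_Iio, mem_Ioi] at h1 h2
    rw [if_pos ⟨h1, by linarith⟩, mul_assoc]
    exact kk_low hε hc hlow hy hz
  rw [lintegral_const_mul _ (meas_ofReal_rpow _)] at h
  have h2 := lt_of_le_of_lt h hL
  by_contra hcon
  have hcon' : ∫⁻ y in Iio x, ENNReal.ofReal (y ^ (1 - α)) ∂ν = ∞ := by
    simpa using hcon
  rw [hcon', ENNReal.mul_top (by simp; positivity), ENNReal.top_mul hP] at h2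
  exact lt_irrefl _ h2

lemma Aint_le_const {g : ℝ → ℝ≥0∞} {y z C : ℝ} (hC : 0 ≤ C)
    (h : ∀ x ∈ Ioo y (y + z), g x ≤ ENNReal.ofReal C) :
    Aint g y z ≤ ENNReal.ofReal (C * z) := by
  unfold Aint
  calc ∫⁻ x in Ioo y (y + z), g x ≤ ∫⁻ x in Ioo y (y + z), ENNReal.ofReal C :=
        setLIntegral_mono' measurableSet_Ioo h
    _ = ENNReal.ofReal (C * z) := by
        rw [setLIntegral_const, Real.volume_Ioo, ENNReal.ofReal_mul hC]; congr 2; ring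

lemma LL_ae_fin {ν : Measure ℝ} [SFinite ν] (hpos : ∀ᵐ x ∂ν, 0 < x)
    {α ε : ℝ} (hα : α ∈ Ioo (0:ℝ) 1) {W : ℝ → ℝ → ℝ} (hWm : Measurable (Function.uncurry (kk ε W)))
    (hε : 0 < ε)
    (hup : ∀ x y : ℝ, 0 < x → 0 < y → W x y ≤ (x / y) ^ α + (y / x) ^ α)
    (hM1 : Mom ν 1 < ∞) (hM : Mom ν (1 - α) < ∞) :
    ∀ᵐ x ∂(volume.restrict (Ioi (0:ℝ))), LL ν (kk ε W) x < ∞ := by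
  obtain ⟨hα0, hα1⟩ := hα
  set g : ℝ → ℝ≥0∞ := fun x => ENNReal.ofReal (exp (-x)) with hg
  have hgm : Measurable g := by fun_prop
  have key : ∫⁻ x in Ioi (0:ℝ), g x * LL ν (kk ε W) x < ∞ := by
    rw [tonelli_LL hpos hWm hgm]
    refine lt_of_le_of_lt (three_le hpos (c1 := 2) (c2 := ε) (c3 := ε) (p1 := 1) (q1 := 1)
      (p2 := 1) (q2 := 1 - α) (p3 := 1 - α) (q3 := 1) (by norm_num) hε.le hε.le ?_) ?_
    · intro y z hy hz
      have b1 : Aint g y z ≤ ENNReal.ofReal z := by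
        have := Aint_le_const (g := g) (y := y) (z := z) (C := 1) (by norm_num) (by
          intro x hx
          apply ENNReal.ofReal_le_ofReal
          apply Real.exp_le_one_iff.2; linarith [hx.1])
        simpa using this
      have b2 : Aint g y z ≤ ENNReal.ofReal (y ^ (-α) * z) := by
        apply Aint_le_const (by positivity)
        intro x hx
        apply ENNReal.ofReal_le_ofReal
        have hx0 : 0 < x := by linarith [hx.1]
        have : x ^ (-α) ≤ y ^ (-α) := Real.rpow_le_rpow_of_nonpos hy hx.1.le (by linarith)
        refine le_trans ?_ this
        rw [Real.rpow_neg hx0.le, Real.exp_neg]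
        apply inv_anti₀ (by positivity)
        rcases le_total x 1 with h | h
        · calc x ^ α ≤ 1 := Real.rpow_le_one hx0.le h hα0.le
            _ ≤ exp x := Real.one_le_exp hx0.le
        · calc x ^ α ≤ x ^ (1:ℝ) := Real.rpow_le_rpow_of_exponent_le h hα1.le
            _ ≤ exp x := by rw [Real.rpow_one]; linarith [Real.add_one_le_exp x]
      have b4 : Aint g y z ≤ ENNReal.ofReal 1 := by
        unfold Aint
        calc ∫⁻ x in Ioo y (y + z), g x ≤ ∫⁻ x in Ioi (0:ℝ), g x := by
              apply lintegral_mono_set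
              intro x hx; simp only [mem_Ioi]; linarith [hx.1]
          _ = ENNReal.ofReal (∫ x in Ioi (0:ℝ), exp (-x)) := by
              rw [ofReal_integral_eq_lintegral_ofReal]
              · exact integrableOn_exp_neg_Ioi 0
              · exact Eventually.of_forall fun x => (exp_pos _).le
          _ = ENNReal.ofReal 1 := by rw [integral_exp_neg_Ioi_zero]
      have b3 : Aint g y z ≤ ENNReal.ofReal (z ^ (1 - α)) := by
        rcases le_total z 1 with h | h
        · refine b1.trans (ENNReal.ofReal_le_ofReal ?_)
          calc z = z ^ (1:ℝ) := by simp
            _ ≤ _ := Real.rpow_le_rpow_of_exponent_ge hz h (by linarith)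
        · exact b4.trans (ENNReal.ofReal_le_ofReal (Real.one_le_rpow h (by linarith)))
      obtain ⟨A, hA0, hA, hA1, hA2, hA3⟩ : ∃ A : ℝ, 0 ≤ A ∧ Aint g y z = ENNReal.ofReal A ∧ A ≤ z ∧
          A ≤ y ^ (-α) * z ∧ A ≤ z ^ (1 - α) := by
        have hfin : Aint g y z ≠ ∞ := ne_top_of_le_ne_top ENNReal.ofReal_ne_top b1
        refine ⟨(Aint g y z).toReal, ENNReal.toReal_nonneg, (ENNReal.ofReal_toReal hfin).symm,
          ENNReal.toReal_le_of_le_ofReal hz.le b1, 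
          ENNReal.toReal_le_of_le_ofReal (by positivity) b2,
          ENNReal.toReal_le_of_le_ofReal (by positivity) b3⟩
      rw [hA]
      refine (mul_le_mul_left (kk_up hε hup hy hz) _).trans ?_
      rw [← ENNReal.ofReal_mul (by positivity)]
      apply ENNReal.ofReal_le_ofReal
      have t1 : y * 2 * A ≤ 2 * (y ^ (1:ℝ) * z ^ (1:ℝ)) := by
        rw [Real.rpow_one, Real.rpow_one]
        nlinarith
      have t2 : y * (y / z) ^ α * A ≤ y ^ (1:ℝ) * z ^ (1 - α) := by
        calc y * (y / z) ^ α * A ≤ y * (y / z) ^ α * (y ^ (-α) * z) := by gcongr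
          _ = _ := by
            rw [Real.div_rpow hy.le hz.le, Real.rpow_neg hy.le, Real.rpow_sub hz, Real.rpow_one,
              Real.rpow_one]
            field_simp
      have t3 : y * (z / y) ^ α * A ≤ y ^ (1 - α) * z ^ (1:ℝ) := by
        calc y * (z / y) ^ α * A ≤ y * (z / y) ^ α * z ^ (1 - α) := by gcongr
          _ = _ := by
            rw [rpow_id1 hy hz, Real.rpow_sub hz, Real.rpow_one]
            field_simp
      have t2' := mul_le_mul_of_nonneg_left t2 hε.le
      have t3' := mul_le_mul_of_nonneg_left t3 hε.le
      nlinarith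
    · have := ENNReal.mul_lt_top hM1 hM1
      have := ENNReal.mul_lt_top hM1 hM
      have := ENNReal.mul_lt_top hM hM1
      simp only [ENNReal.add_lt_top]
      refine ⟨⟨?_, ?_⟩, ?_⟩ <;> exact ENNReal.mul_lt_top ENNReal.ofReal_lt_top (by assumption)
  have h2 := ae_lt_top (hgm.mul (meas_LL hWm)) key.ne
  filter_upwards [h2] with x hx
  by_contra hcon
  have hcon' : LL ν (kk ε W) x = ∞ := by simpa using hcon
  simp only [Pi.mul_apply, hcon', hg] at hx
  rw [ENNReal.mul_top (by simp; positivity)] at hx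
  exact lt_irrefl _ hx

lemma step3 {ν : Measure ℝ} (hpos : ∀ᵐ x ∂ν, 0 < x)
    {α ε c : ℝ} {W : ℝ → ℝ → ℝ} (hε : 0 < ε) (hc : 0 < c)
    (hlow : ∀ x y : ℝ, 0 < x → 0 < y → c * ((x / y) ^ α + (y / x) ^ α) ≤ W x y)
    (hid : ∀ g : ℝ → ℝ≥0∞, Measurable g → ∫⁻ x, ENNReal.ofReal (x ^ 2) * g x ∂ν
      = ∫⁻ y, ∫⁻ z, kk ε W y z * Aint g y z ∂ν ∂ν)
    {r p : ℝ} (hp : p ≤ 1) (hM : Mom ν p < ∞)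
    (hP : ∫⁻ z in Ioi r, ENNReal.ofReal (z ^ α) ∂ν ≠ 0) :
    ∫⁻ y in Iio r, ENNReal.ofReal (y ^ (p - α)) ∂ν < ∞ := by
  have hm := hid (fun x => ENNReal.ofReal (x ^ (p - 2))) (by fun_prop)
  have e1 : ∫⁻ x, ENNReal.ofReal (x ^ 2) * ENNReal.ofReal (x ^ (p - 2)) ∂ν = Mom ν p := by
    unfold Mom
    apply lintegral_congr_ae
    filter_upwards [hpos] with x hx
    rw [← ENNReal.ofReal_mul (by positivity)]
    congr 1
    rw [← Real.rpow_natCast, ← Real.rpow_add hx]; congr 1; push_cast; ring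
  rw [e1] at hm
  set D : ℝ := ε * c * 2 ^ (p - 2) with hD
  have hD0 : 0 < D := by positivity
  have h : (∫⁻ y in Iio r, ENNReal.ofReal D * ENNReal.ofReal (y ^ (p - α)) ∂ν)
      * (∫⁻ z in Ioi r, ENNReal.ofReal (z ^ α) ∂ν) ≤ Mom ν p := by
    rw [hm]
    apply dprod_le hpos (by fun_prop) (by fun_prop) measurableSet_Iio measurableSet_Ioi
    intro y z hy hz h1 h2
    simp only [mem_Iio, mem_Ioi] at h1 h2
    have hA : ENNReal.ofReal ((2 * y) ^ (p - 2) * y)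
        ≤ Aint (fun x => ENNReal.ofReal (x ^ (p - 2))) y z := by
      unfold Aint
      calc ENNReal.ofReal ((2 * y) ^ (p - 2) * y)
          = ∫⁻ x in Ioo y (2 * y), ENNReal.ofReal ((2 * y) ^ (p - 2)) := by
            rw [setLIntegral_const, Real.volume_Ioo, ENNReal.ofReal_mul (by positivity)]
            congr 2; ring
        _ ≤ ∫⁻ x in Ioo y (2 * y), ENNReal.ofReal (x ^ (p - 2)) := by
            apply setLIntegral_mono' measurableSet_Ioo
            intro x hx
            apply ENNReal.ofReal_le_ofReal
            exact Real.rpow_le_rpow_of_nonpos (by linarith [hx.1]) hx.2.le (by linarith)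
        _ ≤ _ := by
            apply lintegral_mono_set
            intro x hx; exact ⟨hx.1, by linarith [hx.2]⟩
    refine le_trans ?_ (mul_le_mul' (kk_low hε hc hlow hy hz) hA)
    rw [← ENNReal.ofReal_mul (by positivity), ← ENNReal.ofReal_mul (by positivity),
      ← ENNReal.ofReal_mul (by positivity), ← ENNReal.ofReal_mul (by positivity),
      ← ENNReal.ofReal_mul (by positivity)]
    apply ENNReal.ofReal_le_ofReal
    apply le_of_eq
    have : y ^ (p - α) = y ^ (1 - α) * (y ^ (p - 2) * y) := by
      nth_rewrite 4 [← Real.rpow_one y]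
      rw [← Real.rpow_add hy, ← Real.rpow_add hy]; congr 1; ring
    rw [this, hD, Real.mul_rpow (by norm_num) hy.le]
    ring
  rw [lintegral_const_mul _ (meas_ofReal_rpow _)] at h
  have h2 := lt_of_le_of_lt h hM
  by_contra hcon
  have hcon' : ∫⁻ y in Iio r, ENNReal.ofReal (y ^ (p - α)) ∂ν = ∞ := by
    simpa using hcon
  rw [hcon', ENNReal.mul_top (by simp; positivity), ENNReal.top_mul hP] at h2
  exact lt_irrefl _ h2

lemma Aint_eq {f : ℝ → ℝ} {y z : ℝ} (hy : 0 < y) (hz : 0 < z) (hf : ContinuousOn f (Ioi 0))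
    (h0 : ∀ x, 0 < x → 0 ≤ f x) :
    Aint (fun x => ENNReal.ofReal (f x)) y z = ENNReal.ofReal (∫ x in y..(y + z), f x) := by
  unfold Aint
  rw [intervalIntegral.integral_of_le (by linarith), integral_Ioc_eq_integral_Ioo,
    ofReal_integral_eq_lintegral_ofReal]
  · have : IntegrableOn f (Icc y (y + z)) := by
      apply ContinuousOn.integrableOn_Icc
      apply hf.mono
      intro x hx; simp only [mem_Ioi]; linarith [hx.1]
    exact this.mono_set Ioo_subset_Icc_self
  · filter_upwards [ae_restrict_mem measurableSet_Ioo] with x hx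
    exact h0 x (by linarith [hx.1])

lemma mom0_le {ν : Measure ℝ} [SFinite ν] (hpos : ∀ᵐ x ∂ν, 0 < x)
    {α ε c : ℝ} {W : ℝ → ℝ → ℝ} (hε : 0 < ε) (hc : 0 < c)
    (hlow : ∀ x y : ℝ, 0 < x → 0 < y → c * ((x / y) ^ α + (y / x) ^ α) ≤ W x y)
    (hid : ∀ g : ℝ → ℝ≥0∞, Measurable g → ∫⁻ x, ENNReal.ofReal (x ^ 2) * g x ∂ν
      = ∫⁻ y, ∫⁻ z, kk ε W y z * Aint g y z ∂ν ∂ν)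
    (hM : Mom ν 0 < ∞) : Mom ν 0 ≤ 1 := by
  have hm := hid (fun x => ENNReal.ofReal (x ^ (-2:ℝ))) (by fun_prop)
  have e1 : ∫⁻ x, ENNReal.ofReal (x ^ 2) * ENNReal.ofReal (x ^ (-2:ℝ)) ∂ν = Mom ν 0 := by
    unfold Mom
    apply lintegral_congr_ae
    filter_upwards [hpos] with x hx
    rw [← ENNReal.ofReal_mul (by positivity)]
    congr 1
    rw [← Real.rpow_natCast, ← Real.rpow_add hx]; congr 1; push_cast; ring
  rw [e1] at hm
  have mJ : Measurable (fun w : ℝ × ℝ => ENNReal.ofReal (2 * w.2 / (w.1 + w.2))) := by fun_prop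
  have hJ : ∫⁻ y, ∫⁻ z, ENNReal.ofReal (2 * z / (y + z)) ∂ν ∂ν ≤ Mom ν 0 := by
    rw [hm]
    apply dmono hpos
    intro y z hy hz
    rw [Aint_eq (f := fun x => x ^ (-2:ℝ)) hy hz]
    · refine le_trans ?_ (mul_le_mul_left (kk_low2 hε hc hlow hy hz) _)
      rw [← ENNReal.ofReal_mul (by positivity)]
      apply ENNReal.ofReal_le_ofReal
      rw [integral_rpow]
      · apply le_of_eq
        norm_num
        rw [Real.rpow_neg_one, Real.rpow_neg_one]
        field_simp
        ring
      · right
        refine ⟨by norm_num, ?_⟩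
        rw [uIcc_of_le (by linarith)]
        intro h; linarith [h.1]
    · intro x hx
      exact (Real.continuousAt_rpow_const x _ (Or.inl (ne_of_gt hx))).continuousWithinAt
    · intro x hx; positivity
  have hsw : ∫⁻ y, ∫⁻ z, ENNReal.ofReal (2 * z / (y + z)) ∂ν ∂ν
      = ∫⁻ y, ∫⁻ z, ENNReal.ofReal (2 * y / (y + z)) ∂ν ∂ν := by
    rw [lintegral_lintegral_swap mJ.aemeasurable]
    simp_rw [add_comm]
  have hsum : ∫⁻ y, ∫⁻ z, ENNReal.ofReal (2 * z / (y + z)) ∂ν ∂ν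
      + ∫⁻ y, ∫⁻ z, ENNReal.ofReal (2 * y / (y + z)) ∂ν ∂ν = 2 * (Mom ν 0 * Mom ν 0) := by
    have : (2:ℝ≥0∞) = ENNReal.ofReal 2 := by simp
    rw [this, ← mom_mul_const hpos (by norm_num), ← lintegral_add_left]
    · apply lintegral_congr_ae
      filter_upwards [hpos] with y hy
      rw [← lintegral_add_left]
      · apply lintegral_congr_ae
        filter_upwards [hpos] with z hz
        rw [← ENNReal.ofReal_add (by positivity) (by positivity)]
        congr 1
        rw [Real.rpow_zero, Real.rpow_zero]
        field_simp
        ring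
      · fun_prop
    · exact Measurable.lintegral_prod_right' (ν := ν) mJ
  rw [← hsw] at hsum
  obtain ⟨m, hm0⟩ : ∃ m : NNReal, Mom ν 0 = m := ⟨(Mom ν 0).toNNReal, by
    rw [ENNReal.coe_toNNReal hM.ne]⟩
  rw [hm0] at hJ hsum ⊢
  have h3 : 2 * ((m:ℝ≥0∞) * m) ≤ m + m := by rw [← hsum]; exact add_le_add hJ hJ
  norm_cast at h3 ⊢
  by_contra hcon
  push Not at hcon
  have : (1:ℝ) < m := by exact_mod_cast hcon
  have h3' : 2 * ((m:ℝ) * m) ≤ m + m := by exact_mod_cast h3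
  nlinarith

lemma log_le_s {t s : ℝ} (ht : 0 < t) (hs : 0 < s) (hs1 : s ≤ 1) :
    Real.log (1 + t) ≤ t ^ s / s := by
  rw [le_div_iff₀ hs]
  have h1 : (1 + t) ^ s ≤ 1 + t ^ s := by
    have := Real.rpow_add_le_add_rpow (p := s) zero_le_one ht.le hs.le hs1
    simpa using this
  have h2 : Real.log (1 + t) * s = Real.log ((1 + t) ^ s) := by
    rw [Real.log_rpow (by linarith)]; ring
  rw [h2]
  have h3 : 0 < t ^ s := by positivity
  calc Real.log ((1 + t) ^ s) ≤ Real.log (1 + t ^ s) := Real.log_le_log (by positivity) h1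
    _ ≤ (1 + t ^ s) - 1 := Real.log_le_sub_one_of_pos (by linarith)
    _ = t ^ s := by ring

lemma momα_low {ν : Measure ℝ} [SFinite ν] (hpos : ∀ᵐ x ∂ν, 0 < x)
    {α ε : ℝ} (hα : α ∈ Ioo (0:ℝ) 1) {W : ℝ → ℝ → ℝ} (hε : 0 < ε) (hε1 : ε ≤ (1 - α) / 16)
    (hup : ∀ x y : ℝ, 0 < x → 0 < y → W x y ≤ (x / y) ^ α + (y / x) ^ α)
    (hid : ∀ g : ℝ → ℝ≥0∞, Measurable g → ∫⁻ x, ENNReal.ofReal (x ^ 2) * g x ∂ν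
      = ∫⁻ y, ∫⁻ z, kk ε W y z * Aint g y z ∂ν ∂ν)
    (hM0 : Mom ν 0 ≤ 1) (hM1 : Mom ν 1 = 1) :
    ENNReal.ofReal (1 / (4 * (2 / (1 - α) + 1))) ≤ Mom ν α := by
  obtain ⟨hα0, hα1⟩ := hα
  have hα' : 0 < 1 - α := by linarith
  have hm := hid (fun x => ENNReal.ofReal (x⁻¹)) (by fun_prop)
  have e1 : ∫⁻ x, ENNReal.ofReal (x ^ 2) * ENNReal.ofReal (x⁻¹) ∂ν = Mom ν 1 := by
    unfold Mom
    apply lintegral_congr_ae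
    filter_upwards [hpos] with x hx
    rw [← ENNReal.ofReal_mul (by positivity)]
    congr 1
    rw [Real.rpow_one]; field_simp
  rw [e1, hM1] at hm
  have hb := three_le hpos (H := fun y z => kk ε W y z * Aint (fun x => ENNReal.ofReal (x⁻¹)) y z)
    (c1 := 2 / (1 - α)) (c2 := ε) (c3 := 2 * ε / (1 - α)) (p1 := α) (q1 := 1 - α)
      (p2 := α) (q2 := 1 - α) (p3 := (1 - α) / 2) (q3 := (1 + α) / 2) (by positivity) hε.le
      (by positivity) (by
    intro y z hy hz
    rw [Aint_eq (f := fun x => x⁻¹) hy hz]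
    · refine (mul_le_mul_left (kk_up hε hup hy hz) _).trans ?_
      rw [← ENNReal.ofReal_mul (by positivity)]
      apply ENNReal.ofReal_le_ofReal
      rw [integral_inv_of_pos hy (by linarith)]
      have ht : 0 < z / y := by positivity
      have e2 : (y + z) / y = 1 + z / y := by field_simp
      rw [e2]
      have l1 := log_le_s ht hα' (by linarith)
      have l2 := log_le_s ht one_pos le_rfl
      have l3 := log_le_s ht (s := (1 - α) / 2) (by linarith) (by linarith)
      set l := Real.log (1 + z / y)
      have pw : ∀ s : ℝ, y * (z / y) ^ s = y ^ (1 - s) * z ^ s := fun s => rpow_id1 hy hz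
      have i1 : y * (z / y) ^ (1 - α) = y ^ α * z ^ (1 - α) := by
        rw [pw]; congr 2; ring
      have i3 : y * (z / y) ^ α * (z / y) ^ ((1 - α) / 2)
          = y ^ ((1 - α) / 2) * z ^ ((1 + α) / 2) := by
        rw [mul_assoc, ← Real.rpow_add ht, pw]; congr 2 <;> ring
      have i2 : y * (y / z) ^ α * (z / y) ^ (1:ℝ) = y ^ α * z ^ (1 - α) := by
        have : (y / z) ^ α = (z / y) ^ (-α) := by
          rw [Real.rpow_neg ht.le, ← Real.inv_rpow ht.le, inv_div]
        rw [this, mul_assoc, ← Real.rpow_add ht, ← i1]; congr 2; ring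
      have t1 : y * 2 * l ≤ 2 / (1 - α) * (y ^ α * z ^ (1 - α)) := by
        calc y * 2 * l ≤ y * 2 * ((z / y) ^ (1 - α) / (1 - α)) := by gcongr
          _ = 2 / (1 - α) * (y * (z / y) ^ (1 - α)) := by ring
          _ = _ := by rw [i1]
      have t2 : ε * (y * (y / z) ^ α * l) ≤ ε * (y ^ α * z ^ (1 - α)) := by
        rw [← i2]
        have : l ≤ (z / y) ^ (1:ℝ) := by simpa using l2
        gcongr
      have t3 : ε * (y * (z / y) ^ α * l)
          ≤ 2 * ε / (1 - α) * (y ^ ((1 - α) / 2) * z ^ ((1 + α) / 2)) := by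
        calc ε * (y * (z / y) ^ α * l)
            ≤ ε * (y * (z / y) ^ α * ((z / y) ^ ((1 - α) / 2) / ((1 - α) / 2))) := by gcongr
          _ = 2 * ε / (1 - α) * (y * (z / y) ^ α * (z / y) ^ ((1 - α) / 2)) := by
            field_simp
          _ = _ := by rw [i3]
      calc _ = y * 2 * l + ε * (y * (y / z) ^ α * l) + ε * (y * (z / y) ^ α * l) := by ring
        _ ≤ _ := by linarith
    · exact continuousOn_inv₀.mono (fun x hx => ne_of_gt hx)
    · intro x hx; positivity)
  rw [← hm] at hb
  have two : ∀ q, 0 ≤ q → q ≤ 1 → Mom ν q ≤ ENNReal.ofReal 2 := by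
    intro q h0 h1
    refine (mom_le hpos h0 h1).trans ?_
    rw [hM1]
    refine (add_le_add_left hM0 1).trans ?_
    norm_num
  have hαfin : Mom ν α ≠ ∞ := ne_top_of_le_ne_top ENNReal.ofReal_ne_top (two α hα0.le hα1.le)
  set m := (Mom ν α).toReal with hmdef
  have hmm : Mom ν α = ENNReal.ofReal m := (ENNReal.ofReal_toReal hαfin).symm
  have hm0 : 0 ≤ m := ENNReal.toReal_nonneg
  have hb2 : (1:ℝ≥0∞) ≤ ENNReal.ofReal (2 / (1 - α)) * (ENNReal.ofReal m * ENNReal.ofReal 2)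
      + ENNReal.ofReal ε * (ENNReal.ofReal m * ENNReal.ofReal 2)
      + ENNReal.ofReal (2 * ε / (1 - α)) * (ENNReal.ofReal 2 * ENNReal.ofReal 2) := by
    refine hb.trans ?_
    rw [hmm]
    have q1 := two (1 - α) (by linarith) (by linarith)
    have q2 := two ((1 - α) / 2) (by linarith) (by linarith)
    have q3 := two ((1 + α) / 2) (by linarith) (by linarith)
    gcongr
  simp only [← ENNReal.ofReal_mul hm0, ← ENNReal.ofReal_mul (show (0:ℝ) ≤ 2 by norm_num)] at hb2
  rw [← ENNReal.ofReal_mul (by positivity), ← ENNReal.ofReal_mul (by positivity),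
    ← ENNReal.ofReal_mul (by positivity), ← ENNReal.ofReal_add (by positivity) (by positivity),
    ← ENNReal.ofReal_add (by positivity) (by positivity), ENNReal.one_le_ofReal] at hb2
  rw [hmm]
  apply ENNReal.ofReal_le_ofReal
  have hs : 2 * ε / (1 - α) * (2 * 2) ≤ 1 / 2 := by
    rw [div_mul_eq_mul_div, div_le_iff₀ hα']; linarith
  have hs2 : ε * (m * 2) ≤ 1 * (m * 2) := by
    apply mul_le_mul_of_nonneg_right _ (by positivity); linarith
  rw [div_le_iff₀ (by positivity)]
  have : m * (4 * (2 / (1 - α) + 1)) = 2 * (2 / (1 - α) * (m * 2) + 1 * (m * 2)) := by ring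
  rw [this]
  linarith

noncomputable def nu (φ : ℝ → ℝ) : Measure ℝ :=
  (volume.restrict (Ioi (0:ℝ))).withDensity (fun x => ENNReal.ofReal (φ x))

instance nu_sfinite (φ : ℝ → ℝ) : SFinite (nu φ) := by unfold nu; infer_instance

lemma nu_pos (φ : ℝ → ℝ) : ∀ᵐ x ∂(nu φ), 0 < x :=
  (withDensity_absolutelyContinuous _ _).ae_le (ae_restrict_mem measurableSet_Ioi)

lemma lint_nu {φ : ℝ → ℝ} (hφ : Measurable φ) {g : ℝ → ℝ≥0∞} (hg : Measurable g) :
    ∫⁻ x, g x ∂(nu φ) = ∫⁻ x in Ioi (0:ℝ), ENNReal.ofReal (φ x) * g x := by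
  unfold nu
  rw [lintegral_withDensity_eq_lintegral_mul _ (by fun_prop) hg]
  rfl

lemma kk_meas {ε : ℝ} {W : ℝ → ℝ → ℝ} (hWm : Measurable (Function.uncurry W)) :
    Measurable (Function.uncurry (kk ε W)) := by
  have : Measurable (fun w : ℝ × ℝ => ENNReal.ofReal (w.1 * (2 + ε * Function.uncurry W w))) := by
    fun_prop
  exact this

lemma inner_integrable {φ : ℝ → ℝ} (hφ : Measurable φ) (hφ0 : ∀ x, 0 ≤ φ x)
    (hxphi : IntegrableOn (fun x => x * φ x) (Ioi 0))
    {α ε : ℝ} (hα : α ∈ Ioo (0:ℝ) 1) {W : ℝ → ℝ → ℝ} (hWm : Measurable (Function.uncurry W))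
    (hε : 0 < ε)
    (hup : ∀ x y : ℝ, 0 < x → 0 < y → 0 ≤ W x y ∧ W x y ≤ (x / y) ^ α + (y / x) ^ α)
    {y c : ℝ} (hy : 0 < y) (hc : 0 < c) :
    IntegrableOn (fun z => y * Kern ε W y z * φ y * φ z) (Ioi c) := by
  obtain ⟨hα0, hα1⟩ := hα
  have hxphi' : IntegrableOn (fun x => x * φ x) (Ioi c) :=
    hxphi.mono_set (Ioi_subset_Ioi hc.le)
  set B := y * ((2 + ε * ((y / c) ^ α + 1)) / c + ε / y) * φ y with hB
  have hWy : Measurable (fun z => W y z) := hWm.comp (f := fun z => (y, z)) (by fun_prop)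
  refine Integrable.mono' (hxphi'.const_mul B) ?_ ?_
  · unfold Kern
    apply Measurable.aestronglyMeasurable
    fun_prop
  · filter_upwards [ae_restrict_mem measurableSet_Ioi] with z hz
    simp only [mem_Ioi] at hz
    have hz0 : 0 < z := by linarith
    obtain ⟨w0, w1⟩ := hup y z hy hz0
    have hyy := hφ0 y
    have hzz := hφ0 z
    have hK0 : 0 ≤ Kern ε W y z := by unfold Kern; positivity
    rw [Real.norm_of_nonneg (by positivity)]
    have b1 : (y / z) ^ α ≤ (y / c) ^ α := by gcongr
    have b2 : (z / y) ^ α ≤ 1 + z / y := by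
      have hzy : 0 < z / y := by positivity
      rcases le_total (z / y) 1 with h | h
      · have := Real.rpow_le_one hzy.le h hα0.le
        linarith
      · have := Real.rpow_le_rpow_of_exponent_le h hα1.le
        rw [Real.rpow_one] at this; linarith
    have b3 : Kern ε W y z ≤ ((2 + ε * ((y / c) ^ α + 1)) / c + ε / y) * z := by
      unfold Kern
      have h1 : ε * W y z ≤ ε * ((y / c) ^ α + (1 + z / y)) := by
        apply mul_le_mul_of_nonneg_left _ hε.le; linarith
      have h2 : 2 + ε * ((y / c) ^ α + 1) ≤ (2 + ε * ((y / c) ^ α + 1)) / c * z := by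
        rw [div_mul_eq_mul_div, le_div_iff₀ hc]
        apply mul_le_mul_of_nonneg_left hz.le; positivity
      have h3 : ε * (z / y) = ε / y * z := by ring
      nlinarith
    calc y * Kern ε W y z * φ y * φ z
        ≤ y * (((2 + ε * ((y / c) ^ α + 1)) / c + ε / y) * z) * φ y * φ z := by gcongr
      _ = B * (z * φ z) := by rw [hB]; ring

lemma rhs_eq {φ : ℝ → ℝ} (hφ : Measurable φ) (hφ0 : ∀ x, 0 ≤ φ x)
    (hxphi : IntegrableOn (fun x => x * φ x) (Ioi 0))
    {α ε : ℝ} (hα : α ∈ Ioo (0:ℝ) 1) {W : ℝ → ℝ → ℝ} (hWm : Measurable (Function.uncurry W))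
    (hε : 0 < ε)
    (hup : ∀ x y : ℝ, 0 < x → 0 < y → 0 ≤ W x y ∧ W x y ≤ (x / y) ^ α + (y / x) ^ α)
    (x : ℝ) :
    ∫ y in Ioo 0 x, ∫ z in Ioi (x - y), y * Kern ε W y z * φ y * φ z
      = (LL (nu φ) (kk ε W) x).toReal := by
  have hkm := kk_meas (ε := ε) hWm
  have hR : Measurable (fun w : ℝ × ℝ => if w.1 < x ∧ x < w.1 + w.2 then kk ε W w.1 w.2 else 0) := by
    apply Measurable.ite _ hkm measurable_const
    exact (measurableSet_lt (f := fun w : ℝ × ℝ => w.1) (g := fun _ => x) (by fun_prop)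
      (by fun_prop)).inter (measurableSet_lt (f := fun _ => x) (g := fun w : ℝ × ℝ => w.1 + w.2)
      (by fun_prop) (by fun_prop))
  set G : ℝ → ℝ≥0∞ := fun y => ∫⁻ z, (if y < x ∧ x < y + z then kk ε W y z else 0) ∂(nu φ) with hG
  have hGm : Measurable G := Measurable.lintegral_prod_right' (ν := nu φ) hR
  have hLL : LL (nu φ) (kk ε W) x = ∫⁻ y in Ioo 0 x, ENNReal.ofReal (φ y) * G y := by
    unfold LL
    rw [lint_nu hφ hGm, ← lintegral_indicator measurableSet_Ioi,
      ← lintegral_indicator measurableSet_Ioo]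
    congr 1; ext y
    by_cases h0 : 0 < y
    · by_cases h1 : y < x
      · simp [indicator, h0, h1]
      · have : G y = 0 := by simp [hG, h1]
        simp [indicator, h0, h1, this]
    · simp [indicator, h0]
  have hinner : ∀ y ∈ Ioo 0 x, ENNReal.ofReal (φ y) * G y
      = ENNReal.ofReal (∫ z in Ioi (x - y), y * Kern ε W y z * φ y * φ z) := by
    intro y hy
    have hxy : 0 < x - y := by linarith [hy.2]
    rw [ofReal_integral_eq_lintegral_ofReal
      (inner_integrable hφ hφ0 hxphi hα hWm hε hup hy.1 hxy)]
    · simp only [hG]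
      have hm2 : Measurable (fun z => if y < x ∧ x < y + z then kk ε W y z else 0) :=
        hR.comp (f := fun z => (y, z)) (by fun_prop)
      rw [lint_nu hφ hm2, ← lintegral_const_mul _ (by fun_prop),
        ← lintegral_indicator measurableSet_Ioi, ← lintegral_indicator measurableSet_Ioi]
      congr 1; ext z
      by_cases hz : x - y < z
      · have hz0 : 0 < z := by linarith
        have hz1 : x < y + z := by linarith
        simp only [indicator, mem_Ioi, hz0, hz, hz1, hy.2, and_self, if_true]
        unfold kk Kern
        rw [← ENNReal.ofReal_mul (hφ0 z), ← ENNReal.ofReal_mul (hφ0 y)]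
        congr 1; ring
      · have hz1 : ¬ x < y + z := by intro h; apply hz; linarith
        simp [indicator, hz, hz1]
    · filter_upwards [ae_restrict_mem measurableSet_Ioi] with z hz
      have hz0 : 0 < z := lt_trans hxy hz
      have := (hup y z hy.1 hz0).1
      have h1 := hφ0 y
      have h2 := hφ0 z
      have h3 := hy.1
      simp only [Pi.zero_apply]
      unfold Kern
      positivity
  have hinn0 : ∀ y ∈ Ioo 0 x, 0 ≤ ∫ z in Ioi (x - y), y * Kern ε W y z * φ y * φ z := by
    intro y hy
    apply setIntegral_nonneg measurableSet_Ioi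
    intro z hz
    have hz0 : 0 < z := lt_trans (by linarith [hy.2]) hz
    have := (hup y z hy.1 hz0).1
    have h1 := hφ0 y
    have h2 := hφ0 z
    have h3 := hy.1
    unfold Kern
    positivity
  rw [hLL, ← integral_toReal]
  · apply setIntegral_congr_fun measurableSet_Ioo
    intro y hy
    simp only
    rw [hinner y hy, ENNReal.toReal_ofReal (hinn0 y hy)]
  · exact Measurable.aemeasurable (by fun_prop)
  · filter_upwards [ae_restrict_mem measurableSet_Ioo] with y hy
    rw [hinner y hy]; exact ENNReal.ofReal_lt_top

lemma exists_mid {φ : ℝ → ℝ} (hφ0 : ∀ x, 0 ≤ φ x)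
    (hxphi : IntegrableOn (fun x => x * φ x) (Ioi 0))
    (hone : ∫ x in Ioi (0:ℝ), x * φ x = 1) {P : ℝ → Prop}
    (hP : ∀ᵐ x ∂(volume.restrict (Ioi (0:ℝ))), P x) :
    ∃ x, 0 < x ∧ P x ∧ 0 < φ x ∧ ∫ z in Ioi x, z * φ z ≠ 0 := by
  have h1 : Integrable ((Ioi (0:ℝ)).indicator (fun x => x * φ x)) :=
    (integrable_indicator_iff measurableSet_Ioi).2 hxphi
  set h := (Ioi (0:ℝ)).indicator (fun x => x * φ x) with hh
  have hcont : Continuous (fun b => ∫ x in (0:ℝ)..b, h x) :=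
    intervalIntegral.continuous_primitive (fun a b => h1.intervalIntegrable) 0
  have hlim : Tendsto (fun b => ∫ x in (0:ℝ)..b, h x) atTop (nhds (∫ x in Ioi (0:ℝ), h x)) :=
    intervalIntegral_tendsto_integral_Ioi 0 h1.integrableOn tendsto_id
  have e1 : ∫ x in Ioi (0:ℝ), h x = 1 := by
    rw [← hone]
    apply setIntegral_congr_fun measurableSet_Ioi
    intro x hx; simp [hh, mem_Ioi.1 hx]
  rw [e1] at hlim
  obtain ⟨B, hB, hB0⟩ : ∃ B, 1 / 2 < ∫ x in (0:ℝ)..B, h x ∧ 0 ≤ B :=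
    ((hlim.eventually (lt_mem_nhds (by norm_num : (1/2:ℝ) < 1))).and (eventually_ge_atTop 0)).exists
  obtain ⟨b, hb, hbe⟩ : ∃ b ∈ Icc 0 B, ∫ x in (0:ℝ)..b, h x = 1 / 2 := by
    have := intermediate_value_Icc hB0 hcont.continuousOn
    exact this ⟨by simp, hB.le⟩
  have hb2 : ∫ x in Ioc 0 b, x * φ x = 1 / 2 := by
    rw [← hbe, intervalIntegral.integral_of_le hb.1]
    apply setIntegral_congr_fun measurableSet_Ioc
    intro x hx; simp [hh, hx.1]
  have hb3 : ∫ x in Ioi b, x * φ x = 1 / 2 := by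
    have := setIntegral_union (μ := volume) (f := fun x => x * φ x) (Ioc_disjoint_Ioi (le_refl b) (a := 0))
      measurableSet_Ioi (hxphi.mono_set Ioc_subset_Ioi_self)
      (hxphi.mono_set (Ioi_subset_Ioi hb.1))
    rw [Ioc_union_Ioi_eq_Ioi hb.1, hone, hb2] at this
    linarith
  by_contra hcon
  push Not at hcon
  have hz : ∫ x in Ioc 0 b, x * φ x = 0 := by
    apply integral_eq_zero_of_ae
    have hP' : ∀ᵐ x ∂(volume.restrict (Ioc 0 b)), P x :=
      ae_restrict_of_ae_restrict_of_subset Ioc_subset_Ioi_self hP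
    filter_upwards [hP', ae_restrict_mem measurableSet_Ioc] with x hx hxm
    by_cases hφx : 0 < φ x
    · exfalso
      have h0 := hcon x hxm.1 hx hφx
      have hle : ∫ z in Ioi b, z * φ z ≤ ∫ z in Ioi x, z * φ z := by
        apply setIntegral_mono_set (hxphi.mono_set (Ioi_subset_Ioi hxm.1.le))
        · filter_upwards [ae_restrict_mem measurableSet_Ioi] with z hz
          have : 0 < z := lt_trans hxm.1 hz
          have := hφ0 z
          simp only [Pi.zero_apply]; positivity
        · exact (Ioi_subset_Ioi hxm.2).eventuallyLE
      rw [hb3, h0] at hle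
      norm_num at hle
    · have : φ x = 0 := le_antisymm (not_lt.1 hφx) (hφ0 x)
      simp [this]
  rw [hb2] at hz
  norm_num at hz

lemma mom_integrable {φ : ℝ → ℝ} (hφ : Measurable φ) (hφ0 : ∀ x, 0 ≤ φ x) {p : ℝ}
    (h : Mom (nu φ) p < ∞) : IntegrableOn (fun x => x ^ p * φ x) (Ioi 0) ∧
      ENNReal.ofReal (∫ x in Ioi (0:ℝ), x ^ p * φ x) = Mom (nu φ) p := by
  have e : Mom (nu φ) p = ∫⁻ x in Ioi (0:ℝ), ENNReal.ofReal (x ^ p * φ x) := by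
    unfold Mom
    rw [lint_nu hφ (meas_ofReal_rpow p)]
    apply setLIntegral_congr_fun measurableSet_Ioi
    intro x hx
    simp only
    rw [← ENNReal.ofReal_mul (hφ0 x), mul_comm]
  have hnn : 0 ≤ᵐ[volume.restrict (Ioi (0:ℝ))] (fun x => x ^ p * φ x) := by
    filter_upwards [ae_restrict_mem measurableSet_Ioi] with x hx
    have h1 := hφ0 x
    have h2 : 0 < x := hx
    simp only [Pi.zero_apply]; positivity
  have hi : IntegrableOn (fun x => x ^ p * φ x) (Ioi 0) := by
    refine ⟨Measurable.aestronglyMeasurable (by fun_prop), ?_⟩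
    rw [hasFiniteIntegral_iff_ofReal hnn, ← e]; exact h
  exact ⟨hi, by rw [e, ofReal_integral_eq_lintegral_ofReal hi hnn]⟩

lemma moments {φ : ℝ → ℝ} (hφ : Measurable φ) (hφ0 : ∀ x, 0 ≤ φ x)
    (hxphi : IntegrableOn (fun x => x * φ x) (Ioi 0))
    (hone : ∫ x in Ioi (0:ℝ), x * φ x = 1)
    {α ε c : ℝ} (hα : α ∈ Ico (1/2:ℝ) 1) {W : ℝ → ℝ → ℝ} (hWm : Measurable (Function.uncurry W))
    (hε : 0 < ε) (hε1 : ε ≤ (1 - α) / 16) (hc : 0 < c)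
    (hup : ∀ x y : ℝ, 0 < x → 0 < y → 0 ≤ W x y ∧ W x y ≤ (x / y) ^ α + (y / x) ^ α)
    (hlow : ∀ x y : ℝ, 0 < x → 0 < y → c * ((x / y) ^ α + (y / x) ^ α) ≤ W x y)
    (heq : ∀ᵐ x ∂(volume.restrict (Ioi (0:ℝ))),
      x ^ 2 * φ x = ∫ y in Ioo 0 x, ∫ z in Ioi (x - y), y * Kern ε W y z * φ y * φ z) :
    IntegrableOn (fun x => x ^ (-α) * φ x) (Ioi 0) ∧ IntegrableOn (fun x => x ^ α * φ x) (Ioi 0) ∧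
      1 / (4 * (2 / (1 - α) + 1)) ≤ ∫ x in Ioi (0:ℝ), x ^ α * φ x := by
  obtain ⟨hαh, hα1⟩ := hα
  have hα0 : 0 < α := by linarith
  have hα : α ∈ Ioo (0:ℝ) 1 := ⟨hα0, hα1⟩
  have hkm := kk_meas (ε := ε) hWm
  have hpos := nu_pos φ
  have hup' : ∀ x y : ℝ, 0 < x → 0 < y → W x y ≤ (x / y) ^ α + (y / x) ^ α :=
    fun x y hx hy => (hup x y hx hy).2
  simp_rw [rhs_eq hφ hφ0 hxphi hα hWm hε hup] at heq
  -- first moment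
  have hM1 : Mom (nu φ) 1 = 1 := by
    unfold Mom
    rw [lint_nu hφ (meas_ofReal_rpow 1), ← ENNReal.ofReal_one, ← hone,
      ofReal_integral_eq_lintegral_ofReal hxphi]
    · apply setLIntegral_congr_fun measurableSet_Ioi
      intro x hx
      simp only
      rw [← ENNReal.ofReal_mul (hφ0 x), mul_comm, hone, Real.rpow_one]
    · filter_upwards [ae_restrict_mem measurableSet_Ioi] with x hx
      have h1 := hφ0 x
      have h2 : 0 < x := hx
      simp only [Pi.zero_apply]; positivity
  have hM1' : Mom (nu φ) 1 < ∞ := by rw [hM1]; exact ENNReal.one_lt_top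
  obtain ⟨r, hr, hre, hrφ, hrT⟩ := exists_mid hφ0 hxphi hone heq
  have hLr : LL (nu φ) (kk ε W) r < ∞ := by
    by_contra hcon
    have : LL (nu φ) (kk ε W) r = ∞ := by simpa using hcon
    rw [this, ENNReal.toReal_top] at hre
    have : 0 < r ^ 2 * φ r := by positivity
    linarith
  have hP : ∫⁻ z in Ioi r, ENNReal.ofReal (z ^ α) ∂(nu φ) ≠ 0 := by
    intro h0
    apply hrT
    rw [← lintegral_indicator measurableSet_Ioi,
      lint_nu hφ ((meas_ofReal_rpow α).indicator measurableSet_Ioi),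
      lintegral_eq_zero_iff] at h0
    · apply integral_eq_zero_of_ae
      have h0' := ae_restrict_of_ae_restrict_of_subset (Ioi_subset_Ioi hr.le) h0
      filter_upwards [h0', ae_restrict_mem measurableSet_Ioi] with z hz hzr
      have hz0 : 0 < z := lt_trans hr hzr
      simp only [indicator, hzr, if_true, Pi.zero_apply, mul_eq_zero, ENNReal.ofReal_eq_zero] at hz
      rcases hz with hz | hz
      · have : φ z = 0 := le_antisymm hz (hφ0 z)
        simp [this]
      · exfalso
        have : 0 < z ^ α := by positivity
        linarith
    · exact Measurable.mul (by fun_prop) ((meas_ofReal_rpow α).indicator measurableSet_Ioi)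
  have hMa : Mom (nu φ) (1 - α) < ∞ :=
    fin_of_near (by linarith) hr hM1' (step1 hpos hε hc hlow hLr hP)
  have hLfin := LL_ae_fin hpos hα hkm hε hup' hM1' hMa
  have hid : ∀ g : ℝ → ℝ≥0∞, Measurable g → ∫⁻ x, ENNReal.ofReal (x ^ 2) * g x ∂(nu φ)
      = ∫⁻ y, ∫⁻ z, kk ε W y z * Aint g y z ∂(nu φ) ∂(nu φ) := by
    intro g hg
    rw [← tonelli_LL hpos hkm hg, lint_nu hφ (by fun_prop)]
    apply lintegral_congr_ae
    filter_upwards [hLfin, heq] with x hx1 hx2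
    have : LL (nu φ) (kk ε W) x = ENNReal.ofReal (x ^ 2 * φ x) := by
      rw [hx2, ENNReal.ofReal_toReal hx1.ne]
    rw [this, ENNReal.ofReal_mul (by positivity)]
    ring
  have hMb : Mom (nu φ) (1 - α - α) < ∞ :=
    fin_of_near (by linarith) hr hM1' (step3 hpos hε hc hlow hid (by linarith) hMa hP)
  have hMc : Mom (nu φ) (1 - α - α - α) < ∞ :=
    fin_of_near (by linarith) hr hM1' (step3 hpos hε hc hlow hid (by linarith) hMb hP)
  have hM0 : Mom (nu φ) 0 < ∞ :=
    lt_of_le_of_lt (mom_le hpos (by linarith) zero_le_one) (ENNReal.add_lt_top.2 ⟨hMb, hM1'⟩)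
  have hMn : Mom (nu φ) (-α) < ∞ :=
    lt_of_le_of_lt (mom_le hpos (by linarith) (by linarith)) (ENNReal.add_lt_top.2 ⟨hMc, hM1'⟩)
  have hMp : Mom (nu φ) α < ∞ :=
    lt_of_le_of_lt (mom_le hpos hα0.le hα1.le) (ENNReal.add_lt_top.2 ⟨hM0, hM1'⟩)
  have hM01 := mom0_le hpos hε hc hlow hid hM0
  have hfinal := momα_low hpos hα hε hε1 hup' hid hM01 hM1
  obtain ⟨i1, _⟩ := mom_integrable hφ hφ0 hMn
  obtain ⟨i2, i3⟩ := mom_integrable hφ hφ0 hMp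
  refine ⟨i1, i2, ?_⟩
  rw [← i3] at hfinal
  refine (ENNReal.ofReal_le_ofReal_iff ?_).1 hfinal
  apply setIntegral_nonneg measurableSet_Ioi
  intro x hx
  have h1 := hφ0 x
  have h2 : 0 < x := hx
  positivity

lemma exp_neg_le_rpow {u θ : ℝ} (hu : 0 < u) (h0 : 0 < θ) (h1 : θ < 1) :
    exp (-u) ≤ u ^ (-θ) := by
  rw [Real.rpow_neg hu.le, Real.exp_neg]
  apply inv_anti₀ (by positivity)
  rcases le_total u 1 with h | h
  · calc u ^ θ ≤ 1 := Real.rpow_le_one hu.le h h0.le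
      _ ≤ exp u := Real.one_le_exp hu.le
  · calc u ^ θ ≤ u ^ (1:ℝ) := Real.rpow_le_rpow_of_exponent_le h h1.le
      _ ≤ exp u := by rw [Real.rpow_one]; linarith [Real.add_one_le_exp u]

lemma G_int {p θ z : ℝ} (hp : -1 < p) (h1 : θ < 1) (hz : 0 < z) (A B : ℝ) :
    IntegrableOn (fun x => A * x ^ p + B * (z ^ (p + θ) * (z - x) ^ (-θ))) (Ioo 0 z) ∧
    ∫ x in Ioo 0 z, (A * x ^ p + B * (z ^ (p + θ) * (z - x) ^ (-θ)))
      = (A / (p + 1) + B / (1 - θ)) * z ^ (p + 1) := by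
  have i1 : IntervalIntegrable (fun x : ℝ => x ^ p) volume 0 z :=
    intervalIntegral.intervalIntegrable_rpow' hp
  have i2 : IntervalIntegrable (fun x : ℝ => (z - x) ^ (-θ)) volume 0 z := by
    have := (intervalIntegral.intervalIntegrable_rpow' (a := z) (b := 0) (r := -θ)
      (by linarith)).comp_sub_left z
    simpa using this
  have i3 := (i1.const_mul A).add ((i2.const_mul (z ^ (p + θ))).const_mul B)
  constructor
  · exact ((intervalIntegrable_iff_integrableOn_Ioo_of_le hz.le).1 i3)
  · rw [← integral_Ioc_eq_integral_Ioo, ← intervalIntegral.integral_of_le hz.le,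
      intervalIntegral.integral_add (i1.const_mul A) ((i2.const_mul (z ^ (p + θ))).const_mul B),
      intervalIntegral.integral_const_mul, intervalIntegral.integral_const_mul,
      intervalIntegral.integral_const_mul,
      intervalIntegral.integral_comp_sub_left (fun x => x ^ (-θ)) z, sub_self, sub_zero,
      integral_rpow (Or.inl hp), integral_rpow (Or.inl (by linarith)),
      Real.zero_rpow (by linarith), Real.zero_rpow (by linarith)]
    have : z ^ (p + 1) = z ^ (p + θ) * z ^ (-θ + 1) := by
      rw [← Real.rpow_add hz]; congr 1; ring
    rw [show -θ + 1 = 1 - θ by ring] at *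
    rw [sub_zero, sub_zero]
    rw [show z ^ (p + θ) * (z ^ (1 - θ) / (1 - θ)) = z ^ (p + 1) / (1 - θ) by rw [this]; ring]
    ring

lemma pt_bound {p θ x z : ℝ} (hx : 0 < x) (hxz : x < z) (h0 : 0 < θ) :
    x ^ p * (1 - x / z) ^ (-θ) ≤ 2 ^ θ * x ^ p + 2 ^ |p| * (z ^ (p + θ) * (z - x) ^ (-θ)) := by
  have hz : 0 < z := by linarith
  have hd : 0 < z - x := by linarith
  have e : 1 - x / z = (z - x) / z := by field_simp
  rw [e]
  rcases le_total x (z / 2) with h | h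
  · have h2 : ((z - x) / z) ^ (-θ) ≤ (1 / 2 : ℝ) ^ (-θ) := by
      apply Real.rpow_le_rpow_of_nonpos (by norm_num) _ (by linarith)
      rw [le_div_iff₀ hz]; linarith
    have h3 : (1 / 2 : ℝ) ^ (-θ) = 2 ^ θ := by
      rw [one_div, Real.inv_rpow (by norm_num), Real.rpow_neg (by norm_num), inv_inv]
    rw [h3] at h2
    have h4 : 0 ≤ 2 ^ |p| * (z ^ (p + θ) * (z - x) ^ (-θ)) := by positivity
    calc x ^ p * ((z - x) / z) ^ (-θ) ≤ x ^ p * 2 ^ θ := by gcongr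
      _ ≤ _ := by linarith
  · have h2 : x ^ p ≤ 2 ^ |p| * z ^ p := by
      rcases le_total 0 p with hp | hp
      · calc x ^ p ≤ z ^ p := Real.rpow_le_rpow hx.le hxz.le hp
          _ = 1 * z ^ p := by ring
          _ ≤ 2 ^ |p| * z ^ p := by
            gcongr; exact Real.one_le_rpow (by norm_num) (abs_nonneg _)
      · calc x ^ p ≤ (z / 2) ^ p := Real.rpow_le_rpow_of_nonpos (by linarith) h hp
          _ = 2 ^ |p| * z ^ p := by
            rw [Real.div_rpow hz.le (by norm_num), abs_of_nonpos hp, Real.rpow_neg (by norm_num)]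
            ring
    have h3 : ((z - x) / z) ^ (-θ) = z ^ θ * (z - x) ^ (-θ) := by
      rw [Real.div_rpow hd.le hz.le, Real.rpow_neg hz.le, div_inv_eq_mul]; ring
    rw [h3]
    have h4 : 0 ≤ 2 ^ θ * x ^ p := by positivity
    calc x ^ p * (z ^ θ * (z - x) ^ (-θ))
        ≤ (2 ^ |p| * z ^ p) * (z ^ θ * (z - x) ^ (-θ)) := by gcongr
      _ = 2 ^ |p| * (z ^ (p + θ) * (z - x) ^ (-θ)) := by rw [Real.rpow_add hz]; ring
      _ ≤ _ := by linarith

lemma bern {α x z : ℝ} (hα : α ∈ Ioo (0:ℝ) 1) (hx : 0 < x) (hxz : x < z) :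
    α * (x ^ (-α) * (1 - x / z)) ≤ x ^ (-α) - z ^ (-α) := by
  have hz : 0 < z := by linarith
  have h1 : (x / z) ^ α ≤ 1 - α * (1 - x / z) := by
    have := rpow_one_add_le_one_add_mul_self (s := x / z - 1) (p := α)
      (by have : 0 < x / z := by positivity
          linarith) hα.1.le hα.2.le
    rw [show 1 + (x / z - 1) = x / z by ring] at this
    linarith
  have h2 : z ^ (-α) = x ^ (-α) * (x / z) ^ α := by
    rw [Real.div_rpow hx.le hz.le, Real.rpow_neg hz.le, Real.rpow_neg hx.le]
    field_simp
  rw [h2]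
  have h3 : 0 < x ^ (-α) := by positivity
  nlinarith

lemma analytic_core {α a δ κ : ℝ} (hα : α ∈ Ioo (0:ℝ) 1) (hδ : 0 < δ) (hδ1 : δ < 1 + α - a)
    (hδ2 : δ < α) (hκ : 0 < κ) (b : ℝ) :
    ∃ C > (0:ℝ), ∀ ε : ℝ, 0 < ε → ε ≤ 1 → ∀ P : ℝ → ℝ,
      (∀ x z, 0 < x → x ≤ z → P z ≤ P x) →
      (∀ x z, 0 < x → x ≤ z → z ≤ 1 → κ * ε * (x ^ (-α) - z ^ (-α)) ≤ P x - P z) →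
      ∀ z : ℝ, 0 < z →
        (∫ x in Ioo 0 z, weight (-a) b x * exp (-x) * exp (-(P x - P z))) ≤
            C * ε ^ ((δ - α) / α) * weight (1 + α - a - δ) 0 z := by
  obtain ⟨hα0, hα1⟩ := id hα
  set θ : ℝ := 1 - δ / α with hθ
  have hθ0 : 0 < θ := by
    have : δ / α < 1 := (div_lt_one hα0).2 hδ2
    linarith
  have hθ1 : θ < 1 := by
    have : 0 < δ / α := by positivity
    linarith
  have hαθ : α * θ = α - δ := by rw [hθ]; field_simp
  have hexp : (δ - α) / α = -θ := by rw [hθ]; field_simp; ring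
  set p : ℝ := -a + α - δ with hp
  have hp1 : -1 < p := by linarith
  have hp2 : 1 + α - a - δ = p + 1 := by rw [hp]; ring
  rw [hexp, hp2]
  have hI : IntegrableOn (fun x : ℝ => exp (-x) * x ^ |b|) (Ici 1) := by
    have := Real.GammaIntegral_convergent (s := |b| + 1) (by positivity)
    rw [add_sub_cancel_right] at this
    exact this.mono_set (fun x hx => by simp only [mem_Ioi]; have : (1:ℝ) ≤ x := hx; linarith)
  set Γb : ℝ := ∫ x in Ici (1:ℝ), exp (-x) * x ^ |b| with hΓ
  have hΓ0 : 0 ≤ Γb := by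
    apply setIntegral_nonneg measurableSet_Ici
    intro x hx
    have : (1:ℝ) ≤ x := hx
    positivity
  set S : ℝ := 2 ^ θ / (p + 1) + 2 ^ |p| / (1 - θ) with hS
  have hS0 : 0 < S := by
    have : 0 < p + 1 := by linarith
    have : 0 < 1 - θ := by linarith
    positivity
  set K1 : ℝ := (κ * α) ^ (-θ) * S with hK1
  have hK10 : 0 < K1 := by positivity
  refine ⟨K1 + Γb, by positivity, ?_⟩
  intro ε hε hε1 P hmono hlow
  have hεθ : (κ * ε * α) ^ (-θ) = (κ * α) ^ (-θ) * ε ^ (-θ) := by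
    rw [← Real.mul_rpow (by positivity) hε.le]; congr 1; ring
  -- pointwise bound
  have hpt : ∀ x w, 0 < x → x < w → w ≤ 1 →
      weight (-a) b x * exp (-x) * exp (-(P x - P w)) ≤
        ((κ * ε * α) ^ (-θ) * 2 ^ θ) * x ^ p
          + ((κ * ε * α) ^ (-θ) * 2 ^ |p|) * (w ^ (p + θ) * (w - x) ^ (-θ)) := by
    intro x w hx hxw hw
    have hw0 : 0 < w := by linarith
    have hdd : 0 < 1 - x / w := by
      have : x / w < 1 := (div_lt_one hw0).2 hxw
      linarith
    have hwt : weight (-a) b x = x ^ (-a) := by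
      unfold weight; rw [if_pos (by linarith)]
    rw [hwt]
    set u : ℝ := κ * ε * α * (x ^ (-α) * (1 - x / w)) with hu
    have hu0 : 0 < u := by positivity
    have hle : u ≤ P x - P w := by
      refine le_trans ?_ (hlow x w hx hxw.le hw)
      have := bern hα hx hxw
      calc u = κ * ε * (α * (x ^ (-α) * (1 - x / w))) := by rw [hu]; ring
        _ ≤ _ := by gcongr
    have h1 : exp (-(P x - P w)) ≤ u ^ (-θ) :=
      (Real.exp_le_exp.2 (by linarith)).trans (exp_neg_le_rpow hu0 hθ0 hθ1)
    have h2 : exp (-x) ≤ 1 := Real.exp_le_one_iff.2 (by linarith)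
    have h3 : x ^ (-a) * u ^ (-θ) = (κ * ε * α) ^ (-θ) * (x ^ p * (1 - x / w) ^ (-θ)) := by
      rw [hu, Real.mul_rpow (by positivity) (by positivity),
        Real.mul_rpow (by positivity) hdd.le, ← Real.rpow_mul hx.le,
        show -α * -θ = α - δ by rw [← hαθ]; ring,
        show p = -a + (α - δ) by rw [hp]; ring, Real.rpow_add hx]
      ring
    calc x ^ (-a) * exp (-x) * exp (-(P x - P w)) ≤ x ^ (-a) * 1 * u ^ (-θ) := by gcongr
      _ = (κ * ε * α) ^ (-θ) * (x ^ p * (1 - x / w) ^ (-θ)) := by rw [mul_one, h3]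
      _ ≤ (κ * ε * α) ^ (-θ) *
          (2 ^ θ * x ^ p + 2 ^ |p| * (w ^ (p + θ) * (w - x) ^ (-θ))) := by
        apply mul_le_mul_of_nonneg_left (pt_bound hx hxw hθ0) (by positivity)
      _ = _ := by ring
  have hval : ∀ w : ℝ, ((κ * ε * α) ^ (-θ) * 2 ^ θ / (p + 1) + (κ * ε * α) ^ (-θ) * 2 ^ |p| / (1 - θ))
      * w ^ (p + 1) = K1 * ε ^ (-θ) * w ^ (p + 1) := by
    intro w
    rw [hεθ, hK1, hS]; ring
  have hnn : ∀ x w : ℝ, 0 < x → 0 ≤ weight (-a) b x * exp (-x) * exp (-(P x - P w)) := by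
    intro x w hx
    have : 0 ≤ weight (-a) b x := by unfold weight; split_ifs <;> positivity
    positivity
  intro z hz
  rcases le_or_gt z 1 with hz1 | hz1
  · obtain ⟨g1, g2⟩ := G_int (p := p) (θ := θ) (z := z) hp1 hθ1 hz
      ((κ * ε * α) ^ (-θ) * 2 ^ θ) ((κ * ε * α) ^ (-θ) * 2 ^ |p|)
    have hw : weight (p + 1) 0 z = z ^ (p + 1) := by unfold weight; rw [if_pos hz1]
    rw [hw]
    calc _ ≤ _ := integral_mono_of_nonneg (g := fun x => ((κ * ε * α) ^ (-θ) * 2 ^ θ) * x ^ p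
            + ((κ * ε * α) ^ (-θ) * 2 ^ |p|) * (z ^ (p + θ) * (z - x) ^ (-θ))) (by
            filter_upwards [ae_restrict_mem measurableSet_Ioo] with x hx
            exact hnn x z hx.1) g1 (by
            filter_upwards [ae_restrict_mem measurableSet_Ioo] with x hx
            exact hpt x z hx.1 hx.2 hz1)
      _ = K1 * ε ^ (-θ) * z ^ (p + 1) := by rw [g2, hval]
      _ ≤ _ := by
        have : 0 ≤ ε ^ (-θ) * z ^ (p + 1) := by positivity
        nlinarith
  · obtain ⟨g1, g2⟩ := G_int (p := p) (θ := θ) (z := 1) hp1 hθ1 one_pos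
      ((κ * ε * α) ^ (-θ) * 2 ^ θ) ((κ * ε * α) ^ (-θ) * 2 ^ |p|)
    set G : ℝ → ℝ := fun x => ((κ * ε * α) ^ (-θ) * 2 ^ θ) * x ^ p
            + ((κ * ε * α) ^ (-θ) * 2 ^ |p|) * (1 ^ (p + θ) * (1 - x) ^ (-θ)) with hG
    have hw : weight (p + 1) 0 z = 1 := by
      unfold weight; rw [if_neg (not_le.2 hz1), Real.rpow_zero]
    rw [hw, mul_one]
    have j1 : Integrable ((Ioo (0:ℝ) 1).indicator G) :=
      (integrable_indicator_iff measurableSet_Ioo).2 g1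
    have j2 : Integrable ((Ici (1:ℝ)).indicator (fun x : ℝ => exp (-x) * x ^ |b|)) :=
      (integrable_indicator_iff measurableSet_Ici).2 hI
    have n1 : ∀ x, 0 ≤ (Ioo (0:ℝ) 1).indicator G x := by
      intro x
      apply indicator_nonneg
      intro x hx
      have h1 := hx.1
      have h2 : 0 < 1 - x := by linarith [hx.2]
      simp only [hG]
      positivity
    have n2 : ∀ x, 0 ≤ (Ici (1:ℝ)).indicator (fun x : ℝ => exp (-x) * x ^ |b|) x := by
      intro x
      apply indicator_nonneg
      intro x hx
      have : (1:ℝ) ≤ x := hx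
      positivity
    have hεge : 1 ≤ ε ^ (-θ) := Real.one_le_rpow_of_pos_of_le_one_of_nonpos hε hε1 (by linarith)
    calc _ ≤ ∫ x in Ioo 0 z, ((Ioo (0:ℝ) 1).indicator G x
              + (Ici (1:ℝ)).indicator (fun x : ℝ => exp (-x) * x ^ |b|) x) := by
          apply integral_mono_of_nonneg
          · filter_upwards [ae_restrict_mem measurableSet_Ioo] with x hx
            exact hnn x z hx.1
          · exact (j1.add j2).integrableOn
          · filter_upwards [ae_restrict_mem measurableSet_Ioo] with x hx
            rcases lt_or_ge x 1 with hx1 | hx1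
            · have m1 : x ∈ Ioo (0:ℝ) 1 := ⟨hx.1, hx1⟩
              have m2 : x ∉ Ici (1:ℝ) := by simpa using hx1
              rw [indicator_of_mem m1, indicator_of_notMem m2, add_zero]
              refine le_trans ?_ (hpt x 1 hx.1 hx1 le_rfl)
              have hwn : 0 ≤ weight (-a) b x := by
                have := hx.1
                unfold weight; split_ifs <;> positivity
              have hPP := hmono 1 z one_pos hz1.le
              gcongr
            · have m1 : x ∉ Ioo (0:ℝ) 1 := by intro h; linarith [h.2]
              have m2 : x ∈ Ici (1:ℝ) := hx1
              rw [indicator_of_notMem m1, indicator_of_mem m2, zero_add]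
              have hwn : weight (-a) b x ≤ x ^ |b| := by
                unfold weight
                split_ifs with h
                · have : x = 1 := le_antisymm h hx1
                  rw [this]; simp
                · exact Real.rpow_le_rpow_of_exponent_le hx1 (le_abs_self b)
              have hx0 := hx.1
              have he : exp (-(P x - P z)) ≤ 1 :=
                Real.exp_le_one_iff.2 (by linarith [hmono x z hx.1 hx.2.le])
              calc weight (-a) b x * exp (-x) * exp (-(P x - P z))
                  ≤ x ^ |b| * exp (-x) * 1 := by gcongr
                _ = _ := by ring
      _ ≤ ∫ x, ((Ioo (0:ℝ) 1).indicator G x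
              + (Ici (1:ℝ)).indicator (fun x : ℝ => exp (-x) * x ^ |b|) x) :=
          setIntegral_le_integral (j1.add j2)
            (Eventually.of_forall fun x => add_nonneg (n1 x) (n2 x))
      _ = K1 * ε ^ (-θ) + Γb := by
          rw [integral_add j1 j2, integral_indicator measurableSet_Ioo,
            integral_indicator measurableSet_Ici, g2, hval, Real.one_rpow, mul_one]
      _ ≤ (K1 + Γb) * ε ^ (-θ) := by nlinarith

lemma phi_bounds {φ : ℝ → ℝ} (hφ : Measurable φ) (hφ0 : ∀ x, 0 ≤ φ x)
    {α ε c m : ℝ} (hα : α ∈ Ioo (0:ℝ) 1) {W : ℝ → ℝ → ℝ} (hWm : Measurable (Function.uncurry W))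
    (hε : 0 < ε) (hc : 0 < c) (hm : 0 < m)
    (hup : ∀ x y : ℝ, 0 < x → 0 < y → 0 ≤ W x y ∧ W x y ≤ (x / y) ^ α + (y / x) ^ α)
    (hlow : ∀ x y : ℝ, 0 < x → 0 < y → c * ((x / y) ^ α + (y / x) ^ α) ≤ W x y)
    (i1 : IntegrableOn (fun x => x ^ (-α) * φ x) (Ioi 0))
    (i2 : IntegrableOn (fun x => x ^ α * φ x) (Ioi 0))
    (hmm : m ≤ ∫ x in Ioi (0:ℝ), x ^ α * φ x) :
    (∀ x z, 0 < x → x ≤ z → Phi ε W φ z ≤ Phi ε W φ x) ∧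
    (∀ x z, 0 < x → x ≤ z → z ≤ 1 →
      (c * m * exp (-1) / α) * ε * (x ^ (-α) - z ^ (-α)) ≤ Phi ε W φ x - Phi ε W φ z) := by
  obtain ⟨hα0, hα1⟩ := hα
  set Mn := ∫ x in Ioi (0:ℝ), x ^ (-α) * φ x with hMn
  set Mp := ∫ x in Ioi (0:ℝ), x ^ α * φ x with hMp
  have hMn0 : 0 ≤ Mn := by
    apply setIntegral_nonneg measurableSet_Ioi
    intro x hx
    have h1 := hφ0 x
    have h2 : 0 < x := hx
    positivity
  have hMp0 : 0 ≤ Mp := by linarith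
  have d1 : ∀ y z : ℝ, 0 < y → 0 < z → (y / z) ^ α = y ^ α * z ^ (-α) := by
    intro y z hy hz
    rw [Real.div_rpow hy.le hz.le, Real.rpow_neg hz.le]; rfl
  have iB : ∀ y : ℝ, IntegrableOn (fun z => y ^ α * (z ^ (-α) * φ z)
      + y ^ (-α) * (z ^ α * φ z)) (Ioi 0) := fun y => (i1.const_mul _).add (i2.const_mul _)
  have iW : ∀ y : ℝ, 0 < y → IntegrableOn (fun z => W y z * φ z) (Ioi 0) := by
    intro y hy
    refine Integrable.mono' (iB y) ?_ ?_
    · have : Measurable (fun z => W y z) := hWm.comp (f := fun z => (y, z)) (by fun_prop)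
      exact (this.mul hφ).aestronglyMeasurable
    · filter_upwards [ae_restrict_mem measurableSet_Ioi] with z hz
      have hz0 : 0 < z := hz
      obtain ⟨w0, w1⟩ := hup y z hy hz0
      have h1 := hφ0 z
      rw [Real.norm_of_nonneg (by positivity)]
      rw [d1 y z hy hz0, d1 z y hz0 hy] at w1
      calc W y z * φ z ≤ (y ^ α * z ^ (-α) + z ^ α * y ^ (-α)) * φ z := by gcongr
        _ = _ := by ring
  have bup : ∀ y : ℝ, 0 < y → betaW W φ y ≤ y ^ α * Mn + y ^ (-α) * Mp := by
    intro y hy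
    unfold betaW
    rw [hMn, hMp, ← integral_const_mul, ← integral_const_mul,
      ← integral_add (i1.const_mul _) (i2.const_mul _)]
    apply setIntegral_mono_on (iW y hy) (iB y) measurableSet_Ioi
    intro z hz
    have hz0 : 0 < z := hz
    obtain ⟨w0, w1⟩ := hup y z hy hz0
    have h1 := hφ0 z
    rw [d1 y z hy hz0, d1 z y hz0 hy] at w1
    calc W y z * φ z ≤ (y ^ α * z ^ (-α) + z ^ α * y ^ (-α)) * φ z := by gcongr
      _ = _ := by ring
  have blow : ∀ y : ℝ, 0 < y → c * m * y ^ (-α) ≤ betaW W φ y := by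
    intro y hy
    have : c * y ^ (-α) * Mp ≤ betaW W φ y := by
      unfold betaW
      rw [hMp, ← integral_const_mul]
      apply setIntegral_mono_on (i2.const_mul _) (iW y hy) measurableSet_Ioi
      intro z hz
      have hz0 : 0 < z := hz
      have w1 := hlow y z hy hz0
      have h1 := hφ0 z
      rw [d1 z y hz0 hy] at w1
      have h2 : 0 ≤ c * (y / z) ^ α := by positivity
      calc c * y ^ (-α) * (z ^ α * φ z) = (c * (z ^ α * y ^ (-α))) * φ z := by ring
        _ ≤ W y z * φ z := by gcongr; linarith
    refine le_trans ?_ this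
    have : 0 ≤ c * y ^ (-α) := by positivity
    nlinarith
  have bmeas : Measurable (betaW W φ) := by
    have h : StronglyMeasurable (fun w : ℝ × ℝ => Function.uncurry W w * φ w.2) :=
      (by fun_prop : Measurable (fun w : ℝ × ℝ => Function.uncurry W w * φ w.2)).stronglyMeasurable
    exact (StronglyMeasurable.integral_prod_right' (ν := volume.restrict (Ioi (0:ℝ))) h).measurable
  have b0 : ∀ y : ℝ, 0 < y → 0 ≤ betaW W φ y := by
    intro y hy
    refine le_trans ?_ (blow y hy)
    positivity
  have iP : ∀ x : ℝ, 0 < x → IntegrableOn (fun y => betaW W φ y / y * exp (-y)) (Ioi x) := by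
    intro x hx
    refine Integrable.mono' ((integrableOn_exp_neg_Ioi x).const_mul
      (x ^ (α - 1) * Mn + x ^ (-α - 1) * Mp)) ?_ ?_
    · exact Measurable.aestronglyMeasurable (by fun_prop)
    · filter_upwards [ae_restrict_mem measurableSet_Ioi] with y hy
      have hxy : x < y := hy
      have hy0 : 0 < y := lt_trans hx hy
      have h0 := b0 y hy0
      rw [Real.norm_of_nonneg (by positivity)]
      apply mul_le_mul_of_nonneg_right _ (exp_pos _).le
      rw [div_le_iff₀ hy0]
      have p1 : y ^ α ≤ x ^ (α - 1) * y := by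
        calc y ^ α = y ^ (α - 1) * y := by rw [Real.rpow_sub hy0, Real.rpow_one]; field_simp
          _ ≤ _ := by
            apply mul_le_mul_of_nonneg_right _ hy0.le
            exact Real.rpow_le_rpow_of_nonpos hx hxy.le (by linarith)
      have p2 : y ^ (-α) ≤ x ^ (-α - 1) * y := by
        calc y ^ (-α) = y ^ (-α - 1) * y := by rw [Real.rpow_sub hy0, Real.rpow_one]; field_simp
          _ ≤ _ := by
            apply mul_le_mul_of_nonneg_right _ hy0.le
            exact Real.rpow_le_rpow_of_nonpos hx hxy.le (by linarith)
      have q1 := mul_le_mul_of_nonneg_right p1 hMn0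
      have q2 := mul_le_mul_of_nonneg_right p2 hMp0
      linarith [bup y hy0]
  have hdiff : ∀ x z, 0 < x → x ≤ z → Phi ε W φ x - Phi ε W φ z
      = ε * ∫ y in Ioc x z, betaW W φ y / y * exp (-y) := by
    intro x z hx hxz
    unfold Phi
    have := setIntegral_union (μ := volume) (f := fun y => betaW W φ y / y * exp (-y))
      (Ioc_disjoint_Ioi (le_refl z) (a := x)) measurableSet_Ioi
      ((iP x hx).mono_set Ioc_subset_Ioi_self) ((iP x hx).mono_set (Ioi_subset_Ioi hxz))
    rw [Ioc_union_Ioi_eq_Ioi hxz] at this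
    rw [this]; ring
  constructor
  · intro x z hx hxz
    have h1 := hdiff x z hx hxz
    have : 0 ≤ ∫ y in Ioc x z, betaW W φ y / y * exp (-y) := by
      apply setIntegral_nonneg measurableSet_Ioc
      intro y hy
      have hy0 : 0 < y := lt_trans hx hy.1
      have := b0 y hy0
      positivity
    have := mul_nonneg hε.le this
    linarith
  · intro x z hx hxz hz1
    rw [hdiff x z hx hxz]
    have hv : ∫ y in x..z, y ^ (-α - 1) = (x ^ (-α) - z ^ (-α)) / α := by
      rw [integral_rpow]
      · rw [show -α - 1 + 1 = -α by ring]; field_simp; ring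
      · right
        refine ⟨by linarith, ?_⟩
        rw [uIcc_of_le hxz]
        intro h; linarith [h.1]
    have hi : IntegrableOn (fun y : ℝ => y ^ (-α - 1)) (Ioc x z) := by
      have : ContinuousOn (fun y : ℝ => y ^ (-α - 1)) (Icc x z) := by
        intro y hy
        have hy0 : 0 < y := lt_of_lt_of_le hx hy.1
        exact (Real.continuousAt_rpow_const y _ (Or.inl hy0.ne')).continuousWithinAt
      exact this.integrableOn_Icc.mono_set Ioc_subset_Icc_self
    have hle : (c * m * exp (-1)) * ∫ y in x..z, y ^ (-α - 1)
        ≤ ∫ y in Ioc x z, betaW W φ y / y * exp (-y) := by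
      rw [intervalIntegral.integral_of_le hxz, ← integral_const_mul]
      apply setIntegral_mono_on (hi.const_mul _) ((iP x hx).mono_set Ioc_subset_Ioi_self)
        measurableSet_Ioc
      intro y hy
      have hy0 : 0 < y := lt_trans hx hy.1
      have hy1 : y ≤ 1 := hy.2.trans hz1
      have h1 := blow y hy0
      have h2 : exp (-1) ≤ exp (-y) := Real.exp_le_exp.2 (by linarith)
      have h3 := b0 y hy0
      calc c * m * exp (-1) * y ^ (-α - 1) = (c * m * y ^ (-α)) / y * exp (-1) := by
            rw [Real.rpow_sub hy0, Real.rpow_one]; ring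
        _ ≤ betaW W φ y / y * exp (-y) := by gcongr
    calc _ = ε * ((c * m * exp (-1)) * ∫ y in x..z, y ^ (-α - 1)) := by rw [hv]; ring
      _ ≤ _ := by gcongr

theorem stmt18 (α : ℝ) (hα : α ∈ Ico (1/2 : ℝ) 1)
    (W : ℝ → ℝ → ℝ) (hW : GoodW α W)
    (cstar : ℝ) (hcstar : 0 < cstar)
    (hlow : ∀ x y : ℝ, 0 < x → 0 < y → cstar * ((x / y) ^ α + (y / x) ^ α) ≤ W x y)
    (a δ : ℝ) (ha : a ∈ Ioo (0:ℝ) (1 + α)) (hδ : δ ∈ Ioo 0 (min (1 + α - a) α)) :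
    ∃ εstar > (0:ℝ), ∀ b : ℝ, ∃ C > (0:ℝ), ∀ ε : ℝ, 0 < ε → ε ≤ εstar →
      ∀ φ : ℝ → ℝ, IsProfile (Kern ε W) φ → IsNormalised φ →
        ∀ z : ℝ, 0 < z →
          (∫ x in Ioo 0 z,
              weight (-a) b x * exp (-x) * exp (-(Phi ε W φ x - Phi ε W φ z))) ≤
            C * ε ^ ((δ - α) / α) * weight (1 + α - a - δ) 0 z := by
  obtain ⟨hWc, hWs, hWh, hWb⟩ := hW
  have hα' : α ∈ Ioo (0:ℝ) 1 := ⟨by linarith [hα.1], hα.2⟩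
  have hα1 : 0 < 1 - α := by linarith [hα.2]
  have hδ1 := lt_min_iff.1 hδ.2
  have hε16 : 0 < (1 - α) / 16 := by positivity
  have hm : 0 < 1 / (4 * (2 / (1 - α) + 1)) := by positivity
  have hα0 := hα'.1
  set m := 1 / (4 * (2 / (1 - α) + 1)) with hmdef
  refine ⟨(1 - α) / 16, hε16, ?_⟩
  intro b
  obtain ⟨C, hC, hmain⟩ := analytic_core hα' hδ.1 hδ1.1 hδ1.2
    (show 0 < cstar * m * exp (-1) / α by positivity) b
  refine ⟨C, hC, ?_⟩
  intro ε hε hε1 φ hprof hnorm z hz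
  obtain ⟨hloc, hnn, hxphi, heq⟩ := hprof
  -- measurable version of the kernel
  classical
  set V : ℝ → ℝ → ℝ := fun x y => (Ioi (0:ℝ) ×ˢ Ioi (0:ℝ)).piecewise
    (fun q : ℝ × ℝ => W q.1 q.2) (fun _ => 0) (x, y) with hV
  have hVW : ∀ x y, 0 < x → 0 < y → V x y = W x y := by
    intro x y hx hy
    simp only [hV]
    have hmem : (x, y) ∈ Ioi (0:ℝ) ×ˢ Ioi (0:ℝ) := ⟨hx, hy⟩
    rw [piecewise_eq_of_mem _ _ _ hmem]
  have hVm : Measurable (Function.uncurry V) :=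
    hWc.measurable_piecewise continuousOn_const (measurableSet_Ioi.prod measurableSet_Ioi)
  have hVup : ∀ x y : ℝ, 0 < x → 0 < y → 0 ≤ V x y ∧ V x y ≤ (x / y) ^ α + (y / x) ^ α := by
    intro x y hx hy; rw [hVW x y hx hy]; exact hWb x y hx hy
  have hVlow : ∀ x y : ℝ, 0 < x → 0 < y →
      cstar * ((x / y) ^ α + (y / x) ^ α) ≤ V x y := by
    intro x y hx hy; rw [hVW x y hx hy]; exact hlow x y hx hy
  -- measurable nonnegative version of the profile
  have hae := hloc.aestronglyMeasurable
  set ψ : ℝ → ℝ := fun x => max (hae.mk φ x) 0 with hψ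
  have hψm : Measurable ψ := hae.stronglyMeasurable_mk.measurable.max measurable_const
  have hψ0 : ∀ x, 0 ≤ ψ x := fun x => le_max_right _ _
  have hφψ : ∀ᵐ x ∂(volume.restrict (Ioi (0:ℝ))), φ x = ψ x := by
    filter_upwards [hae.ae_eq_mk, hnn] with x h1 h2
    simp only [hψ]
    rw [← h1, max_eq_left h2]
  have hsub : ∀ {s : Set ℝ}, s ⊆ Ioi 0 → ∀ᵐ x ∂(volume.restrict s), φ x = ψ x :=
    fun hs => ae_restrict_of_ae_restrict_of_subset hs hφψ
  have hxphi' : IntegrableOn (fun x => x * ψ x) (Ioi 0) := by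
    refine hxphi.congr ?_
    filter_upwards [hφψ] with x hx
    rw [hx]
  have hone : ∫ x in Ioi (0:ℝ), x * ψ x = 1 := by
    rw [← hnorm]
    apply integral_congr_ae
    filter_upwards [hφψ] with x hx
    rw [hx]
  have heq' : ∀ᵐ x ∂(volume.restrict (Ioi (0:ℝ))),
      x ^ 2 * ψ x = ∫ y in Ioo 0 x, ∫ z in Ioi (x - y), y * Kern ε V y z * ψ y * ψ z := by
    filter_upwards [heq, hφψ] with x hx hx2
    rw [← hx2, hx]
    apply integral_congr_ae
    filter_upwards [hsub (s := Ioo 0 x) Ioo_subset_Ioi_self, ae_restrict_mem measurableSet_Ioo]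
      with y hy hym
    have hxy : 0 < x - y := by linarith [hym.2]
    apply integral_congr_ae
    filter_upwards [hsub (s := Ioi (x - y)) (Ioi_subset_Ioi hxy.le),
      ae_restrict_mem measurableSet_Ioi] with w hw hwm
    have hw0 : 0 < w := lt_trans hxy hwm
    rw [← hy, ← hw]
    unfold Kern
    rw [hVW y w hym.1 hw0]
  obtain ⟨i1, i2, i3⟩ := moments hψm hψ0 hxphi' hone hα hVm hε hε1 hcstar hVup hVlow heq'
  obtain ⟨q1, q2⟩ := phi_bounds hψm hψ0 hα' hVm hε hcstar hm hVup hVlow i1 i2 i3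
  have hPhi : ∀ x, 0 < x → Phi ε W φ x = Phi ε V ψ x := by
    intro x hx
    unfold Phi
    congr 1
    apply setIntegral_congr_fun measurableSet_Ioi
    intro y hy
    have hy0 : 0 < y := lt_trans hx hy
    have : betaW W φ y = betaW V ψ y := by
      unfold betaW
      apply integral_congr_ae
      filter_upwards [hφψ, ae_restrict_mem measurableSet_Ioi] with w hw hwm
      rw [hw, hVW y w hy0 hwm]
    simp only [this]
  have hfin := hmain ε hε (by linarith) (Phi ε V ψ) q1 q2 z hz
  refine le_trans (le_of_eq ?_) hfin
  apply setIntegral_congr_fun measurableSet_Ioo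
  intro x hx
  simp only [hPhi x hx.1, hPhi z hz]
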